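/- arXiv:2512.17000 — 2 statements merged into one kernel-verified Lean document; each statement's English description precedes it below -/
import Mathlib

section
/- Let N > 1 be an odd integer and let q be a primitive N-th root of unity in ℂ (choose v with v² = q). Suppose Δ : 𝒪_q(B⁺) → 𝒪_q(B⁺) ⊗_ℂ 𝒪_q(B⁺) is an algebra homomorphism satisfying Δ(z_{ij}) = Σ_{k=i}^{j} z_{ik} ⊗ z_{kj} for all 1 ≤ i ≤ j ≤ n (the standard comultiplication of the quantum Borel algebra). Then for all 1 ≤ i ≤ j ≤ n one has Δ(z_{ij}^N) = Σ_{k=i}^{j} c^k_{ij} · z_{ik}^N ⊗ z_{kj}^N, where c^k_{ij} := 2/(1+q)^N if n is odd, k = n₀ and i < k < j, and c^k_{ij} := 1 otherwise. -/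
noncomputable section
open scoped TensorProduct

namespace SOq

/-- `pr n k = n + 1 - k`, the "primed" index `k'`. -/
def pr (n k : ℕ) : ℕ := n + 1 - k

/-- `2 ρ_i` as an integer. -/
def twoRho (n i : ℕ) : ℤ :=
  if 2 * i < n + 1 then (n : ℤ) - 2 * i
  else if 2 * i = n + 1 then 0
  else (n : ℤ) + 2 - 2 * i

/-- Entries of the matrix `J`: `c_{ij} = δ_{j,i'} q^{-ρ_i}` (with `q^{1/2} := v`). -/
def Jc (n : ℕ) (v : ℂ) (i j : ℕ) : ℂ :=
  if j = pr n i then v ^ (-(twoRho n i)) else 0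

/-- R-matrix coefficients `R^{ij}_{ab}`. -/
def Rc (n : ℕ) (q v : ℂ) (i j a b : ℕ) : ℂ :=
  q ^ (((if i = j then 1 else 0) - (if i = pr n j then 1 else 0) : ℤ)) *
      (if i = a then (1 : ℂ) else 0) * (if j = b then (1 : ℂ) else 0) +
    (if a < i then (1 : ℂ) else 0) * (q - q⁻¹) *
      ((if j = a then (1 : ℂ) else 0) * (if i = b then (1 : ℂ) else 0) -
        Jc n v j i * Jc n v a b)

/-- The free algebra on the generators `z_{ij}`. -/
abbrev FA : Type := FreeAlgebra ℂ (ℕ × ℕ)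

def zf (i j : ℕ) : FA := FreeAlgebra.ι ℂ (i, j)

/-- The FRT relation element `FRT(i,b,j,a)`. -/
def frtRel (n : ℕ) (q v : ℂ) (i b j a : ℕ) : FA :=
  ∑ k ∈ Finset.Icc 1 n, ∑ l ∈ Finset.Icc 1 n,
    (Rc n q v l k a b • (zf i k * zf j l) - Rc n q v j i k l • (zf k a * zf l b))

/-- Entry `(i,j)` of `z J zᵗ J⁻¹ - Id` (note `J⁻¹ = J`). -/
def orthRel₁ (n : ℕ) (v : ℂ) (i j : ℕ) : FA :=
  (∑ k ∈ Finset.Icc 1 n, ∑ l ∈ Finset.Icc 1 n, ∑ m ∈ Finset.Icc 1 n,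
      (Jc n v k l * Jc n v m j) • (zf i k * zf m l)) - (if i = j then (1 : FA) else 0)

/-- Entry `(i,j)` of `J zᵗ J⁻¹ z - Id`. -/
def orthRel₂ (n : ℕ) (v : ℂ) (i j : ℕ) : FA :=
  (∑ k ∈ Finset.Icc 1 n, ∑ l ∈ Finset.Icc 1 n, ∑ m ∈ Finset.Icc 1 n,
      (Jc n v i k * Jc n v l m) • (zf l k * zf m j)) - (if i = j then (1 : FA) else 0)

/-- The defining relations of the quantum Borel algebra `𝒪_q(B⁺) ⊆ 𝒪_q(SO_n)`. -/
inductive Rel (n : ℕ) (q v : ℂ) : FA → FA → Prop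
  | frt : ∀ i b j a : ℕ, i ∈ Finset.Icc 1 n → b ∈ Finset.Icc 1 n → j ∈ Finset.Icc 1 n →
      a ∈ Finset.Icc 1 n → Rel n q v (frtRel n q v i b j a) 0
  | orth₁ : ∀ i j : ℕ, i ∈ Finset.Icc 1 n → j ∈ Finset.Icc 1 n →
      Rel n q v (orthRel₁ n v i j) 0
  | orth₂ : ∀ i j : ℕ, i ∈ Finset.Icc 1 n → j ∈ Finset.Icc 1 n →
      Rel n q v (orthRel₂ n v i j) 0
  | lower : ∀ i j : ℕ, j < i → Rel n q v (zf i j) 0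
  | out : ∀ i j : ℕ, (i = 0 ∨ j = 0 ∨ n < i ∨ n < j) → Rel n q v (zf i j) 0

/-- The quantum Borel algebra `𝒪_q(B⁺)`. -/
abbrev OB (n : ℕ) (q v : ℂ) : Type := RingQuot (Rel n q v)

/-- The generators `z_{ij}` of `𝒪_q(B⁺)`. -/
def z (n : ℕ) (q v : ℂ) (i j : ℕ) : OB n q v :=
  RingQuot.mkAlgHom ℂ (Rel n q v) (zf i j)

end SOq

namespace SOq

/-- The coefficient `c^k_{ij}`. -/
def cCoef (n N : ℕ) (q : ℂ) (i j k : ℕ) : ℂ :=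
  if Odd n ∧ 2 * k = n + 1 ∧ i < k ∧ k < j then 2 / (1 + q) ^ N else 1

/-!
The sum `Δ(z_{ij}) = ∑ z_{ik} ⊗ z_{kj}` has the form `∑ α_k β_k`, where the row `α` and the column
`β` commute with each other and each satisfies the relations of the quantum Euclidean space.
Let `P` and `M` be its terms with `k = b` and `k = b'`, and let `Y` be the sum of the terms
strictly between them. Then `Y` `q²`-commutes with `P` and `M`, while `MP` and `PM` are the values
at `1` and `q²` of one quadratic polynomial `g₀ + t g₁ + t² g₂` with commuting coefficients.

Acting by left multiplication, `P + Y + M` behaves like a combination of a raising and a lowering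
operator, and `P^N + M^N` becomes the trace of a product of `N` transfer matrices of size two whose
spectral parameters run through a geometric progression of `N`-th roots of unity. This trace is
invariant under multiplying the spectral parameter by a root of unity, so only its constant and its
top coefficient survive. Both are traces of `N`-th powers of companion matrices, that is, values of
Dickson polynomials, and the outcome is
`D_N(P + Y + M, g₀) = P^N + M^N + D_N(Y, q² g₂)`.
At `b = 1` one has `g₀ = 0`, and `D_N(x, 0) = x^N`. Applied from the outside inwards, the identity
leaves at the centre a Dickson polynomial whose second argument is, by isotropy, a multiple of
the square of the middle term; this is the origin of the constant `2 / (1 + q)^N`.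

If `i` or `j` is the middle index, the entries of that row or column `q`-commute only up to a
correction, `PM = q MP + C`, which is the same situation with `g = (0, MP + l C, -l C)` for a
scalar `l`, and the terms are split off one at a time.
-/

/-! ### Dickson polynomials and transfer matrices -/

/-- The value at `(x, e)` of the Dickson polynomial of the first kind (`Polynomial.dickson 1`).
The recursion is restated because `x` and `e` live in a noncommutative ring. -/
def dicksonEval {A : Type*} [Ring A] (x e : A) : ℕ → A
  | 0 => 2
  | 1 => x
  | n + 2 => x * dicksonEval x e (n + 1) - e * dicksonEval x e n

section DicksonEval

variable {A : Type*} [Ring A] (x e : A)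

theorem dicksonEval_zero_right {n : ℕ} (hn : n ≠ 0) : dicksonEval x 0 n = x ^ n := by
  obtain ⟨m, rfl⟩ := Nat.exists_eq_succ_of_ne_zero hn
  induction m with
  | zero => exact (pow_one x).symm
  | succ m ih =>
    change x * dicksonEval x 0 (m + 1) - 0 * dicksonEval x 0 m = _
    rw [ih m.succ_ne_zero, zero_mul, sub_zero, ← pow_succ']

theorem dicksonEval_zero_left {n : ℕ} (hn : Odd n) : dicksonEval 0 e n = 0 := by
  obtain ⟨m, rfl⟩ := hn
  induction m with
  | zero => rfl
  | succ m ih =>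
    change 0 * dicksonEval 0 e (2 * m + 2) - e * dicksonEval 0 e (2 * m + 1) = 0
    rw [ih, zero_mul, mul_zero, sub_zero]

theorem dicksonEval_neg_left (n : ℕ) : dicksonEval (-x) e n = (-1) ^ n * dicksonEval x e n := by
  induction n using Nat.twoStepInduction with
  | zero => rw [pow_zero, one_mul]; rfl
  | one => rw [pow_one, neg_one_mul]; rfl
  | more n ih ih' =>
    simp only [dicksonEval, ih, ih', pow_succ]
    rcases neg_one_pow_eq_or A n with h | h <;> rw [h] <;> noncomm_ring

theorem dicksonEval_smul_sq {K : Type*} [CommRing K] [Algebra K A] {a b : K} (hab : a + b = 1)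
    (n : ℕ) : dicksonEval x ((a * b) • x ^ 2) n = (a ^ n + b ^ n) • x ^ n := by
  induction n using Nat.twoStepInduction with
  | zero =>
    rw [pow_zero, pow_zero, pow_zero, add_smul, one_smul, one_add_one_eq_two]; rfl
  | one => rw [pow_one, pow_one, pow_one, hab, one_smul]; rfl
  | more n ih ih' =>
    obtain rfl := eq_sub_of_add_eq' hab
    simp only [dicksonEval, ih, ih', mul_smul_comm, smul_mul_assoc, smul_smul, ← pow_succ',
      ← pow_add, add_comm 2 n, ← sub_smul]
    congr 1
    ring

variable {x e} in
theorem commute_dicksonEval {a : A} (hx : Commute a x) (he : Commute a e) (n : ℕ) :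
    Commute a (dicksonEval x e n) := by
  induction n using Nat.twoStepInduction with
  | zero => exact Commute.ofNat_right a 2
  | one => exact hx
  | more n ih ih' => exact (hx.mul_right ih').sub_right (he.mul_right ih)

theorem trace_companion_pow {R : Type*} [CommRing R] (x e : R) (n : ℕ) :
    (!![x, -e; 1, 0] ^ n).trace = dicksonEval x e n := by
  induction n using Nat.twoStepInduction with
  | zero => simp [dicksonEval]
  | one => simp [dicksonEval, Matrix.trace_fin_two]
  | more n ih ih' =>
    have cayley_hamilton : !![x, -e; 1, 0] ^ 2 = x • !![x, -e; 1, 0] - e • 1 := by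
      ext i j
      fin_cases i <;> fin_cases j <;> simp [pow_two, Matrix.one_fin_two, sub_eq_add_neg]
    rw [pow_add, cayley_hamilton, mul_sub, Matrix.trace_sub]
    simp only [Matrix.mul_smul, Matrix.trace_smul, mul_one, ← pow_succ, ih, ih', dicksonEval,
      smul_eq_mul]

end DicksonEval

/-- The transfer matrix with spectral parameter `t`, whose determinant `f 0 + t f 1 + t² f 2` is
quadratic in `t`. -/
def transferMatrix {R : Type*} [CommRing R] (x y : R) (f : Fin 3 → R) (t : R) :
    Matrix (Fin 2) (Fin 2) R :=
  !![x - t * y, -(f 0 + t * f 1 + t ^ 2 * f 2); 1, 0]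

/-- The ordered product `T(t) T(pt) ⋯ T(pⁿ⁻¹t)` of transfer matrices along a geometric
progression of spectral parameters. -/
def monodromy {R : Type*} [CommRing R] (x y : R) (f : Fin 3 → R) (p t : R) (n : ℕ) :
    Matrix (Fin 2) (Fin 2) R :=
  ((List.range n).map fun i ↦ transferMatrix x y f (p ^ i * t)).prod

section Monodromy

open Polynomial

variable {R : Type*} [CommRing R] (x y : R) (f : Fin 3 → R) (p t : R)

theorem monodromy_zero : monodromy x y f p t 0 = 1 := rfl

theorem monodromy_succ (n : ℕ) :
    monodromy x y f p t (n + 1) = monodromy x y f p t n * transferMatrix x y f (p ^ n * t) :=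
  List.prod_range_succ _ n

theorem monodromy_succ' (n : ℕ) :
    monodromy x y f p t (n + 1) = transferMatrix x y f t * monodromy x y f p (p * t) n := by
  simp only [monodromy, List.prod_range_succ', pow_zero, one_mul, pow_succ, mul_assoc]

theorem monodromy_map {S : Type*} [CommRing S] (φ : R →+* S) (n : ℕ) :
    (monodromy x y f p t n).map φ = monodromy (φ x) (φ y) (φ ∘ f) (φ p) (φ t) n := by
  induction n with
  | zero => simp only [monodromy_zero, Matrix.map_one _ (map_zero φ) (map_one φ)]
  | succ n ih =>
    have transferMatrix_map : (transferMatrix x y f (p ^ n * t)).map φ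
        = transferMatrix (φ x) (φ y) (φ ∘ f) (φ p ^ n * φ t) := by
      ext i j
      fin_cases i <;> fin_cases j <;> simp [transferMatrix]
    rw [monodromy_succ, monodromy_succ, Matrix.map_mul, ih, transferMatrix_map]

theorem monodromy_param_zero (n : ℕ) : monodromy x y f p 0 n = !![x, -(f 0); 1, 0] ^ n := by
  induction n with
  | zero => rw [monodromy_zero, pow_zero]
  | succ n ih => rw [monodromy_succ, ih, pow_succ]; simp [transferMatrix]

theorem monodromy_leading {p' : R} (hp : p * p' = 1) (n : ℕ) (c : R) :
    monodromy 0 y ![0, 0, c] p 1 n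
      = p ^ (∑ i ∈ Finset.range n, i) •
        (!![-y, -(p' * c); 1, 0] ^ n * !![1, 0; 0, p ^ n]) := by
  induction n with
  | zero => simp [monodromy_zero, Matrix.one_fin_two]
  | succ n ih =>
    have diagonal_mul : !![1, 0; 0, p ^ n] * transferMatrix 0 y ![0, 0, c] (p ^ n * 1) =
        p ^ n • (!![-y, -(p' * c); 1, 0] * !![1, 0; 0, p ^ (n + 1)]) := by
      ext i j
      fin_cases i <;> fin_cases j <;> simp [transferMatrix, pow_succ]
      linear_combination -p ^ n * p ^ n * c * hp
    rw [monodromy_succ, ih, Finset.sum_range_succ, pow_add, mul_smul, smul_mul_assoc,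
      Matrix.mul_assoc, diagonal_mul, Matrix.mul_smul, pow_succ !![-y, -(p' * c); 1, 0] n,
      Matrix.mul_assoc]

/-- `f` has degree at most `d`, and `c` (possibly zero) is its coefficient of degree `d`. -/
structure HasTopCoeff (d : ℕ) (c : R) (f : R[X]) : Prop where
  natDegree_le : f.natDegree ≤ d
  coeff_eq : f.coeff d = c

theorem HasTopCoeff.mul {d e : ℕ} {a b : R} {f g : R[X]} (hf : HasTopCoeff d a f)
    (hg : HasTopCoeff e b g) : HasTopCoeff (d + e) (a * b) (f * g) where
  natDegree_le := natDegree_mul_le_of_le hf.natDegree_le hg.natDegree_le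
  coeff_eq := by
    rw [coeff_mul_add_eq_of_natDegree_le hf.natDegree_le hg.natDegree_le, hf.coeff_eq, hg.coeff_eq]

theorem HasTopCoeff.add {d : ℕ} {a b : R} {f g : R[X]} (hf : HasTopCoeff d a f)
    (hg : HasTopCoeff d b g) : HasTopCoeff d (a + b) (f + g) where
  natDegree_le := natDegree_add_le_of_degree_le hf.natDegree_le hg.natDegree_le
  coeff_eq := by rw [coeff_add, hf.coeff_eq, hg.coeff_eq]

/-- The product of transfer matrices taken as polynomials in the spectral parameter. -/
local notation "monodromyPoly" => monodromy (C x) (C y) (C ∘ f) (C p) X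

theorem transferMatrix_hasTopCoeff (s : R) (i j : Fin 2) :
    HasTopCoeff (1 + j - i) (transferMatrix 0 y ![0, 0, f 2] s i j)
      (transferMatrix (C x) (C y) (C ∘ f) (C s * X) i j) := by
  have linear : C x - C s * X * C y = C (-(s * y)) * X + C x := by
    simp only [C_neg, C_mul]; ring
  have quadratic : -(C (f 0) + C s * X * C (f 1) + (C s * X) ^ 2 * C (f 2)) =
      C (-(s ^ 2 * f 2)) * X ^ 2 + C (-(s * f 1)) * X + C (-f 0) := by
    simp only [C_neg, C_mul, C_pow]; ring
  fin_cases i <;> fin_cases j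
  · change HasTopCoeff 1 (0 - s * y) (C x - C s * X * C y)
    exact linear ▸ ⟨natDegree_linear_le, by simp⟩
  · change HasTopCoeff 2 (-(0 + s * 0 + s ^ 2 * f 2))
      (-(C (f 0) + C s * X * C (f 1) + (C s * X) ^ 2 * C (f 2)))
    exact quadratic ▸ ⟨natDegree_quadratic_le, by simp [-map_mul, -map_neg, -map_pow]⟩
  · exact ⟨by simp [transferMatrix], by simp [transferMatrix]⟩
  · exact ⟨by simp [transferMatrix], by simp [transferMatrix]⟩

theorem monodromy_hasTopCoeff (n : ℕ) (i j : Fin 2) :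
    HasTopCoeff (n + 1 + j - i) (monodromy 0 y ![0, 0, f 2] p 1 (n + 1) i j)
      (monodromyPoly (n + 1) i j) := by
  have factor := fun m ↦ transferMatrix_hasTopCoeff x y f (p ^ m * 1)
  simp only [mul_one, C_pow] at factor
  induction n generalizing j with
  | zero => simpa [monodromy] using factor 0 i j
  | succ n ih =>
    have term (l : Fin 2) := (ih l).mul (factor (n + 1) l j)
    have degree (l : Fin 2) : n + 1 + l - i + (1 + j - l) = n + 1 + 1 + j - i := by omega
    simp only [degree] at term
    rw [monodromy_succ _ _ _ _ _ (n + 1), monodromy_succ _ _ _ _ _ (n + 1), Matrix.mul_apply,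
      Matrix.mul_apply, Fin.sum_univ_two, Fin.sum_univ_two, mul_one]
    exact (term 0).add (term 1)

theorem trace_monodromy_hasTopCoeff {n : ℕ} (hn : n ≠ 0) :
    HasTopCoeff n (monodromy 0 y ![0, 0, f 2] p 1 n).trace (monodromyPoly n).trace := by
  obtain ⟨m, rfl⟩ := Nat.exists_eq_succ_of_ne_zero hn
  have diagonal := monodromy_hasTopCoeff x y f p m
  rw [Matrix.trace_fin_two, Matrix.trace_fin_two]
  simpa using (diagonal 0 0).add (diagonal 1 1)

theorem eval₂_trace_monodromy {S : Type*} [CommRing S] (φ : R →+* S) (s : S) (n : ℕ) :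
    eval₂ φ s (monodromyPoly n).trace
      = (monodromy (φ x) (φ y) (φ ∘ f) (φ p) s n).trace := by
  rw [← coe_eval₂RingHom, AddMonoidHom.map_trace, monodromy_map]
  simp [Function.comp_def]

theorem trace_monodromy_rotate {n : ℕ} (hp : p ^ n = 1) :
    (monodromy x y f p (p * t) n).trace = (monodromy x y f p t n).trace := by
  cases n with
  | zero => rfl
  | succ n =>
    rw [monodromy_succ, monodromy_succ', Matrix.trace_mul_comm, ← mul_assoc, ← pow_succ, hp,
      one_mul]

theorem coeff_eq_zero_of_comp_C_mul_X_eq {F : R[X]} (hF : F.comp (C p * X) = F) {k : ℕ}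
    (hk : IsUnit (p ^ k - 1)) : F.coeff k = 0 := by
  have invariant : F.coeff k * p ^ k = F.coeff k := by rw [← comp_C_mul_X_coeff, hF]
  exact hk.mul_left_eq_zero.1 (by linear_combination invariant)

theorem eval_one_eq_coeff_zero_add {F : R[X]} {n : ℕ} (hn : n ≠ 0) (hF : F.natDegree ≤ n)
    (hmid : ∀ k, k ≠ 0 → k < n → F.coeff k = 0) : F.eval 1 = F.coeff 0 + F.coeff n := by
  rw [eval_eq_sum_range' (Nat.lt_succ_of_le hF), Finset.sum_range_succ, one_pow, mul_one,
    Finset.sum_eq_single_of_mem 0 (Finset.mem_range.2 hn.pos), pow_zero, mul_one]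
  intro k hk hk0
  rw [hmid k hk0 (Finset.mem_range.1 hk), zero_mul]

/-- The trace is unchanged under `t ↦ pt`, so as a polynomial in `t` it has only a constant and a
top coefficient. -/
theorem trace_monodromy {p' : R} {N : ℕ} (hN : Odd N) (hp : p ^ N = 1)
    (hunit : ∀ k, k ≠ 0 → k < N → IsUnit (p ^ k - 1)) (hp' : p * p' = 1) :
    (monodromy x y f p 1 N).trace = dicksonEval x (f 0) N - dicksonEval y (p' * f 2) N := by
  have hN0 : N ≠ 0 := hN.pos.ne'
  have top := trace_monodromy_hasTopCoeff x y f p hN0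
  set F := (monodromyPoly N).trace
  have eval_eq (r : R) : F.eval r = (monodromy x y f p r N).trace :=
    eval₂_trace_monodromy x y f p (RingHom.id R) r N
  have comp_eq : F.comp (C p * X) = F := by
    rw [comp, eval₂_trace_monodromy]
    exact trace_monodromy_rotate _ _ _ _ _ (by rw [← C_pow, hp, C_1])
  have triangular : p ^ (∑ i ∈ Finset.range N, i) = 1 := by
    obtain ⟨k, hk⟩ := hN
    rw [Finset.sum_range_id, show N * (N - 1) / 2 = N * k by
      rw [hk, Nat.add_sub_cancel, mul_left_comm, Nat.mul_div_cancel_left _ two_pos], pow_mul, hp,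
      one_pow]
  calc (monodromy x y f p 1 N).trace = F.coeff 0 + F.coeff N := by
        rw [← eval_eq, eval_one_eq_coeff_zero_add hN0 top.natDegree_le fun k hk0 hk ↦
          coeff_eq_zero_of_comp_C_mul_X_eq p comp_eq (hunit k hk0 hk)]
    _ = dicksonEval x (f 0) N + dicksonEval (-y) (p' * f 2) N := by
        rw [coeff_zero_eq_eval_zero, eval_eq, monodromy_param_zero, trace_companion_pow,
          top.coeff_eq, monodromy_leading y p hp', triangular, hp, ← Matrix.one_fin_two, mul_one,
          one_smul, trace_companion_pow]
    _ = dicksonEval x (f 0) N - dicksonEval y (p' * f 2) N := by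
        rw [dicksonEval_neg_left, hN.neg_one_pow, neg_one_mul, ← sub_eq_add_neg]

end Monodromy

/-! ### Weyl pairs -/

section WeylPair

universe u

variable {K : Type*} {A : Type u} [Field K] [Ring A] [Algebra K A]

theorem mul_pow_of_mul_eq_smul {a b : A} {s : K} (h : a * b = s • (b * a)) (n : ℕ) :
    a * b ^ n = s ^ n • (b ^ n * a) := by
  induction n with
  | zero => rw [pow_zero, pow_zero, one_smul, mul_one, one_mul]
  | succ n ih =>
    rw [pow_succ, ← mul_assoc, ih, smul_mul_assoc, mul_assoc, h, mul_smul_comm, smul_smul,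
      ← pow_succ, mul_assoc]

theorem mul_eq_inv_smul {a b : A} {s : K} (hs : s ≠ 0) (h : a * b = s • (b * a)) :
    b * a = s⁻¹ • (a * b) := by
  rw [h, inv_smul_smul₀ hs]

/-- A generalised `Q`-Weyl pair: both products of `P` and `M` are combinations of commuting
elements `g i`, and `P`, `M` shift `g i` by `Q ^ i` in opposite directions. The `g i` are thus the
coefficients of a polynomial `g(t)` with `M P = g(1)`, `P M = g(Q)`. -/
structure IsWeylPair {d : ℕ} (Q : K) (P M : A) (g : Fin d → A) : Prop where
  mul_lower : M * P = ∑ i, g i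
  mul_raise : P * M = ∑ i : Fin d, Q ^ (i : ℕ) • g i
  raise_mul (i : Fin d) : P * g i = Q ^ (i : ℕ) • (g i * P)
  mul_coeff (i : Fin d) : g i * M = Q ^ (i : ℕ) • (M * g i)
  commute (i j : Fin d) : Commute (g i) (g j)

variable {d : ℕ} {Q : K} {P M : A}

theorem IsWeylPair.mul_pow_succ {g : Fin d → A} (h : IsWeylPair Q P M g) (hQ : Q ≠ 0) (j : ℕ) :
    M * P ^ (j + 1) = ∑ i : Fin d, (Q⁻¹ ^ j) ^ (i : ℕ) • (P ^ j * g i) := by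
  rw [pow_succ', ← mul_assoc, h.mul_lower, Finset.sum_mul]
  refine Finset.sum_congr rfl fun i _ ↦ ?_
  rw [mul_pow_of_mul_eq_smul (mul_eq_inv_smul (pow_ne_zero _ hQ) (h.raise_mul i)), ← inv_pow,
    pow_right_comm]

theorem IsWeylPair.mul_pow_succ' {g : Fin d → A} (h : IsWeylPair Q P M g) (j : ℕ) :
    P * M ^ (j + 1) = ∑ i : Fin d, (Q ^ (j + 1)) ^ (i : ℕ) • (M ^ j * g i) := by
  rw [pow_succ', ← mul_assoc, h.mul_raise, Finset.sum_mul]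
  refine Finset.sum_congr rfl fun i _ ↦ ?_
  rw [smul_mul_assoc, mul_pow_of_mul_eq_smul (h.mul_coeff i), smul_smul, ← pow_succ',
    pow_right_comm]

section Module

variable {R : Type*} [CommRing R] [Algebra K R] [Module R A] [IsScalarTower K R A]
  {x y : R} {f : Fin 3 → R} {Y : A} {g : Fin 3 → A}

theorem dicksonEval_smul_one {R A : Type*} [Ring R] [Ring A] [Module R A] {x e : R} {a b : A}
    (hx : ∀ c, Commute c a → x • c = a * c) (he : ∀ c, Commute c b → e • c = b * c)
    (hab : Commute a b) (n : ℕ) : dicksonEval x e n • (1 : A) = dicksonEval a b n := by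
  induction n using Nat.twoStepInduction with
  | zero => exact ofNat_smul_eq_nsmul R 2 (1 : A) |>.trans (by simp [dicksonEval])
  | one => exact (hx 1 (Commute.one_left a)).trans (mul_one a)
  | more n ih ih' =>
    simp only [dicksonEval, sub_smul, mul_smul, ih, ih']
    rw [hx _ (commute_dicksonEval (.refl a) hab _).symm,
      he _ (commute_dicksonEval hab.symm (.refl b) _).symm]

theorem quadratic_smul (hf : ∀ i (a : A), f i • a = a * g i) (s : K) (a : A) :
    (f 0 + algebraMap K R s * f 1 + algebraMap K R s ^ 2 * f 2) • a
      = ∑ i : Fin 3, s ^ (i : ℕ) • (a * g i) := by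
  rw [Fin.sum_univ_three, ← map_pow]
  simp [add_smul, mul_smul, hf, -map_pow]

theorem linear_smul (hy : ∀ a : A, y • a = a * Y) (s : K) (a : A) :
    (x - algebraMap K R s * y) • a = x • a - s • (a * Y) := by
  rw [sub_smul, mul_smul, algebraMap_smul, hy]

/-- Left multiplication by `P + Y + M` and right multiplications by `Y` and the `g i` commute, and
`(P ^ j, -M P ^ j)` solves the recursion governed by the transfer matrices. -/
theorem IsWeylPair.pow_raise_eq (h : IsWeylPair Q P M g) (hQ : Q ≠ 0) (hPY : P * Y = Q • (Y * P))
    (hx : ∀ a : A, x • a = (P + Y + M) * a) (hy : ∀ a : A, y • a = a * Y)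
    (hf : ∀ i (a : A), f i • a = a * g i) (j : ℕ) :
    let T := monodromy x y f (algebraMap K R Q⁻¹) 1 j
    P ^ j = T 0 0 • (1 : A) - T 1 0 • M ∧ -(M * P ^ j) = T 0 1 • (1 : A) - T 1 1 • M := by
  induction j with
  | zero => simp [monodromy_zero]
  | succ j ih =>
    obtain ⟨ih, ih'⟩ := ih
    have raise : P ^ (j + 1) = (x - algebraMap K R (Q⁻¹ ^ j) * y) • P ^ j + -(M * P ^ j) := by
      rw [linear_smul hy, hx, ← mul_pow_of_mul_eq_smul (mul_eq_inv_smul hQ hPY), pow_succ']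
      noncomm_ring
    have lower : M * P ^ (j + 1) = (f 0 + algebraMap K R (Q⁻¹ ^ j) * f 1 +
        algebraMap K R (Q⁻¹ ^ j) ^ 2 * f 2) • P ^ j := by
      rw [quadratic_smul hf, h.mul_pow_succ hQ]
    dsimp only
    rw [lower, raise, ih', ih, monodromy_succ, ← map_pow, mul_one]
    simp only [Matrix.mul_apply, Fin.sum_univ_two, transferMatrix, Matrix.of_apply,
      Matrix.cons_val_zero, Matrix.cons_val_one, Matrix.cons_val_fin_one]
    constructor <;> module

theorem IsWeylPair.pow_lower_eq (h : IsWeylPair Q P M g) (hQ : Q ≠ 0) (hYM : Y * M = Q • (M * Y))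
    (hx : ∀ a : A, x • a = (P + Y + M) * a) (hy : ∀ a : A, y • a = a * Y)
    (hf : ∀ i (a : A), f i • a = a * g i) (j : ℕ) :
    let T := monodromy x y f (algebraMap K R Q⁻¹) (algebraMap K R (Q ^ j)) j
    M ^ (j + 1) = T 0 0 • M + T 0 1 • (1 : A) ∧ M ^ j = T 1 0 • M + T 1 1 • (1 : A) := by
  induction j with
  | zero => simp [monodromy_zero]
  | succ j ih =>
    obtain ⟨ih, ih'⟩ := ih
    have raise : P * M ^ (j + 1) = (f 0 + algebraMap K R (Q ^ (j + 1)) * f 1 +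
        algebraMap K R (Q ^ (j + 1)) ^ 2 * f 2) • M ^ j := by
      rw [quadratic_smul hf, h.mul_pow_succ']
    have lower : M ^ (j + 2) =
        (x - algebraMap K R (Q ^ (j + 1)) * y) • M ^ (j + 1) - P * M ^ (j + 1) := by
      rw [linear_smul hy, hx, ← mul_pow_of_mul_eq_smul hYM, pow_succ' M (j + 1)]
      noncomm_ring
    have shift : algebraMap K R Q⁻¹ * algebraMap K R (Q ^ (j + 1)) = algebraMap K R (Q ^ j) := by
      rw [← map_mul, pow_succ', inv_mul_cancel_left₀ hQ]
    dsimp only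
    rw [lower, raise, ih, ih', monodromy_succ', shift]
    simp only [Matrix.mul_apply, Fin.sum_univ_two, transferMatrix, Matrix.of_apply,
      Matrix.cons_val_zero, Matrix.cons_val_one, Matrix.cons_val_fin_one]
    constructor <;> module

theorem IsWeylPair.pow_add_pow_eq_trace (h : IsWeylPair Q P M g) {N : ℕ} (hN : N ≠ 0)
    (hQ : Q ^ N = 1) (hPY : P * Y = Q • (Y * P)) (hYM : Y * M = Q • (M * Y))
    (hx : ∀ a : A, x • a = (P + Y + M) * a) (hy : ∀ a : A, y • a = a * Y)
    (hf : ∀ i (a : A), f i • a = a * g i) :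
    P ^ N + M ^ N = (monodromy x y f (algebraMap K R Q⁻¹) 1 N).trace • (1 : A) := by
  obtain ⟨m, rfl⟩ := Nat.exists_eq_succ_of_ne_zero hN
  have hQ0 : Q ≠ 0 := by rintro rfl; simp at hQ
  have hQm : Q ^ m = Q⁻¹ := eq_inv_of_mul_eq_one_left (by rw [← pow_succ, hQ])
  have raise := (h.pow_raise_eq hQ0 hPY hx hy hf (m + 1)).1
  have lower := (h.pow_lower_eq hQ0 hYM hx hy hf m).1
  rw [hQm, ← mul_one (algebraMap K R Q⁻¹)] at lower
  rw [Nat.succ_eq_add_one, raise, lower, monodromy_succ', Matrix.trace_fin_two]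
  simp only [transferMatrix, Matrix.mul_apply, Fin.sum_univ_two, Matrix.of_apply, Matrix.cons_val',
    Matrix.cons_val_zero, Matrix.cons_val_one, Matrix.cons_val_fin_one, one_pow, one_mul, mul_one,
    zero_mul, add_zero]
  module

end Module

open scoped IsMulCommutative in
theorem IsWeylPair.exists_module {Y : A} {g : Fin 3 → A} (h : IsWeylPair Q P M g)
    (hY : ∀ i, Commute Y (g i)) (L : A) :
    ∃ (R : Type u) (_ : CommRing R) (_ : Algebra K R) (_ : Module R A) (_ : IsScalarTower K R A)
      (x y : R) (f : Fin 3 → R), (∀ a : A, x • a = L * a) ∧ (∀ a : A, y • a = a * Y) ∧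
        ∀ i (a : A), f i • a = a * g i := by
  let s : Set (Module.End K A) := insert (LinearMap.mulLeft K L)
    (insert (LinearMap.mulRight K Y) (Set.range fun i ↦ LinearMap.mulRight K (g i)))
  have left_right (b : A) : Commute (LinearMap.mulLeft K L) (LinearMap.mulRight K b) :=
    LinearMap.ext fun a ↦ (mul_assoc L a b).symm
  have right_right {b c : A} (hbc : Commute b c) :
      Commute (LinearMap.mulRight K b) (LinearMap.mulRight K c) :=
    LinearMap.ext fun a ↦ by simp [mul_assoc, hbc.eq]
  have comm : ∀ a ∈ s, ∀ b ∈ s, a * b = b * a := by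
    rintro _ (rfl | rfl | ⟨i, rfl⟩) _ (rfl | rfl | ⟨j, rfl⟩)
    exacts [rfl, left_right _, left_right _, (left_right _).symm, rfl, right_right (hY j),
      (left_right _).symm, right_right (hY i).symm, right_right (h.commute i j)]
  have := Algebra.isMulCommutative_adjoin K comm
  exact ⟨Algebra.adjoin K s, inferInstance, inferInstance, inferInstance, inferInstance,
    ⟨_, Algebra.subset_adjoin (.inl rfl)⟩, ⟨_, Algebra.subset_adjoin (.inr (.inl rfl))⟩,
    fun i ↦ ⟨_, Algebra.subset_adjoin (.inr (.inr ⟨i, rfl⟩))⟩, fun _ ↦ rfl, fun _ ↦ rfl,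
    fun _ _ ↦ rfl⟩

theorem IsWeylPair.dicksonEval_add {Y : A} {g : Fin 3 → A} (h : IsWeylPair Q P M g) {N : ℕ}
    (hN : Odd N) (hQ : IsPrimitiveRoot Q N) (hPY : P * Y = Q • (Y * P))
    (hYM : Y * M = Q • (M * Y)) (hY : ∀ i, Commute Y (g i)) :
    dicksonEval (P + Y + M) (g 0) N = P ^ N + M ^ N + dicksonEval Y (Q • g 2) N := by
  have hN0 : N ≠ 0 := hN.pos.ne'
  have hQ0 : Q ≠ 0 := hQ.ne_zero hN0
  obtain ⟨R, _, _, _, _, x, y, f, hx, hy, hf⟩ := h.exists_module hY (P + Y + M)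
  have commute_sum : Commute (P + Y + M) (g 0) := by
    have hP := h.raise_mul 0
    have hM := h.mul_coeff 0
    rw [Fin.val_zero, pow_zero, one_smul] at hP hM
    exact (Commute.add_left hP (hY 0)).add_left hM.symm
  have hunit (k : ℕ) (hk0 : k ≠ 0) (hk : k < N) : IsUnit (algebraMap K R Q⁻¹ ^ k - 1) := by
    rw [← map_pow, ← map_one (algebraMap K R), ← map_sub]
    exact (sub_ne_zero.2 (hQ.inv.pow_ne_one_of_pos_of_lt hk0 hk)).isUnit.map _
  have trace := trace_monodromy x y f (algebraMap K R Q⁻¹) hN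
    (by rw [← map_pow, hQ.inv.pow_eq_one, map_one]) hunit
    (by rw [← map_mul, inv_mul_cancel₀ hQ0, map_one])
  rw [h.pow_add_pow_eq_trace hN0 hQ.pow_eq_one hPY hYM hx hy hf, trace, sub_smul,
    dicksonEval_smul_one (fun a _ ↦ hx a) (fun a ha ↦ (hf 0 a).trans ha) commute_sum,
    dicksonEval_smul_one (fun a ha ↦ (hy a).trans ha) (b := Q • g 2) _ ((hY 2).smul_right Q),
    sub_add_cancel]
  intro a ha
  rw [mul_smul, algebraMap_smul, hf, ← ha.eq, mul_smul_comm]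

theorem mul_mul_mul_eq_smul {a a' b b' : A} {s t : K} (ha : a * a' = s • (a' * a))
    (hb : b * b' = t • (b' * b)) (h : Commute b a') (h' : Commute b' a) :
    (a * b) * (a' * b') = (s * t) • ((a' * b') * (a * b)) := by
  rw [h.mul_mul_mul_comm, h'.mul_mul_mul_comm, ha, hb, smul_mul_smul_comm]

theorem IsWeylPair.mul {P' M' : A} {g g' : Fin 2 → A} (h : IsWeylPair Q P M g)
    (h' : IsWeylPair Q P' M' g')
    (hcomm : ∀ c ∈ insert P (insert M (Set.range g)),
      ∀ c' ∈ insert P' (insert M' (Set.range g')), Commute c c') :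
    IsWeylPair Q (P * P') (M * M')
      ![g 0 * g' 0, g 0 * g' 1 + g 1 * g' 0, g 1 * g' 1] := by
  simp only [Set.forall_mem_insert, Set.forall_mem_range] at hcomm
  obtain ⟨⟨-, hPM', hPg'⟩, ⟨hMP', -, hMg'⟩, hg⟩ := hcomm
  have gg_comm (i j k l) : Commute (g i * g' j) (g k * g' l) :=
    ((h.commute i k).mul_right ((hg i).2.2 l)).mul_left
      (((hg k).2.2 j).symm.mul_right (h'.commute j l))
  have raise (i j : Fin 2) : P * P' * (g i * g' j) =
      Q ^ (i + j : ℕ) • (g i * g' j * (P * P')) :=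
    pow_add Q i j ▸ mul_mul_mul_eq_smul (h.raise_mul i) (h'.raise_mul j) (hg i).1.symm
      (hPg' j).symm
  have lower (i j : Fin 2) : g i * g' j * (M * M') =
      Q ^ (i + j : ℕ) • (M * M' * (g i * g' j)) :=
    pow_add Q i j ▸ mul_mul_mul_eq_smul (h.mul_coeff i) (h'.mul_coeff j) (hMg' j).symm
      (hg i).2.1.symm
  constructor
  · rw [hPM'.symm.mul_mul_mul_comm, h.mul_lower, h'.mul_lower]
    simp only [Fin.sum_univ_two, Fin.sum_univ_three, Matrix.cons_val_zero, Matrix.cons_val_one,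
      Matrix.cons_val, mul_add, add_mul]
    abel
  · rw [hMP'.symm.mul_mul_mul_comm, h.mul_raise, h'.mul_raise]
    simp only [Fin.sum_univ_two, Fin.sum_univ_three, Matrix.cons_val_zero, Matrix.cons_val_one,
      Matrix.cons_val, Fin.coe_ofNat_eq_mod, Nat.zero_mod, Nat.one_mod, Nat.mod_succ, pow_zero,
      pow_one, pow_two, one_smul, mul_add, add_mul, mul_smul_comm, smul_mul_assoc, smul_add,
      smul_smul]
    abel
  · intro i
    fin_cases i
    · simpa using raise 0 0
    · simpa [mul_add, add_mul] using congrArg₂ (· + ·) (raise 0 1) (raise 1 0)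
    · simpa using raise 1 1
  · intro i
    fin_cases i
    · simpa using lower 0 0
    · simpa [mul_add, add_mul] using congrArg₂ (· + ·) (lower 0 1) (lower 1 0)
    · simpa using lower 1 1
  · intro i j
    fin_cases i <;> fin_cases j <;>
      simp [gg_comm, Commute.add_left, Commute.add_right]

theorem isWeylPair_of_q_commutator {q l : K} (hl : q * l = 1 + l * q ^ 2) {P M C : A}
    (h : P * M = q • (M * P) + C) (hPC : P * C = q ^ 2 • (C * P)) (hCM : C * M = q ^ 2 • (M * C)) :
    IsWeylPair q P M ![0, M * P + l • C, -(l • C)] where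
  mul_lower := by simp [Fin.sum_univ_three]
  mul_raise := by
    simp only [Fin.sum_univ_three, h]
    simp only [Matrix.cons_val_zero, Matrix.cons_val_one, Matrix.cons_val,
      Fin.coe_ofNat_eq_mod, Nat.zero_mod, Nat.one_mod, Nat.mod_succ, pow_zero, pow_one,
      smul_zero, smul_add, smul_neg, smul_smul, hl, add_smul, one_smul, mul_comm _ l]
    abel
  raise_mul := by
    rw [Fin.forall_fin_succ, Fin.forall_fin_two]
    refine ⟨by simp, ?_, ?_⟩
    · simp only [Matrix.cons_val_succ, Matrix.cons_val_zero]
      rw [mul_add, ← mul_assoc, h, mul_smul_comm, hPC]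
      simp only [Fin.val_succ, Fin.coe_ofNat_eq_mod, Nat.zero_mod, zero_add, pow_one, add_mul,
        smul_mul_assoc, smul_add, smul_smul, hl, add_smul, one_smul]
      abel
    · simp [hPC, smul_comm l]
  mul_coeff := by
    rw [Fin.forall_fin_succ, Fin.forall_fin_two]
    refine ⟨by simp, ?_, ?_⟩
    · simp only [Matrix.cons_val_succ, Matrix.cons_val_zero]
      rw [add_mul, mul_assoc, h, smul_mul_assoc, hCM]
      simp only [Fin.val_succ, Fin.coe_ofNat_eq_mod, Nat.zero_mod, zero_add, pow_one, mul_add,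
        mul_smul_comm, smul_add, smul_smul, hl, add_smul, one_smul]
      abel
    · simp [hCM, smul_comm l]
  commute := by
    have commute_MP_C : Commute (M * P) C := by
      change M * P * C = C * (M * P)
      rw [mul_assoc, hPC, ← mul_assoc, hCM, mul_smul_comm, smul_mul_assoc, mul_assoc]
    have commute_C : Commute (M * P + l • C) (l • C) :=
      (commute_MP_C.add_left ((Commute.refl C).smul_left l)).smul_right l
    simp [Fin.forall_fin_succ, commute_C, commute_C.symm]

theorem add_pow_of_q_commutator {q : K} {N : ℕ} (hN : Odd N) (hN1 : 1 < N)
    (hq : IsPrimitiveRoot q N) {P M C : A} (h : P * M = q • (M * P) + C)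
    (hPC : P * C = q ^ 2 • (C * P)) (hCM : C * M = q ^ 2 • (M * C)) :
    (P + M) ^ N = P ^ N + M ^ N := by
  have hq0 : q ≠ 0 := hq.ne_zero hN.pos.ne'
  obtain ⟨l, hl⟩ : ∃ l : K, q * l = 1 + l * q ^ 2 := by
    have : 1 - q ≠ 0 := sub_ne_zero.2 (hq.ne_one hN1).symm
    exact ⟨q⁻¹ / (1 - q), by field_simp; ring⟩
  have pair := isWeylPair_of_q_commutator hl h hPC hCM
  have dickson := pair.dicksonEval_add hN hq (Y := 0) (by simp) (by simp) (by simp)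
  rwa [dicksonEval_zero_left _ hN, add_zero, add_zero, Matrix.cons_val_zero,
    dicksonEval_zero_right _ hN.pos.ne'] at dickson

end WeylPair

/-! ### Quantum vectors -/

section QuantumVector

variable {K A : Type*} [Field K] [Ring A] [Algebra K A] {n : ℕ} {q v : K}

theorem twoRho_of_lt {b : ℕ} (h : 2 * b < n + 1) : twoRho n b = n - 2 * b :=
  if_pos h

theorem twoRho_reflect {b : ℕ} (hb : b ≤ n + 1) :
    twoRho n (n + 1 - b) = -twoRho n b := by
  unfold twoRho
  split_ifs <;> omega

theorem zpow_sub_two_mul_succ (hq : q ≠ 0) (m : ℤ) (b : ℕ) :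
    q ^ (m - 2 * (b + 1 : ℕ)) = q ^ (m - 2 * b) * (q ^ 2)⁻¹ := by
  rw [← zpow_natCast, ← zpow_neg, ← zpow_add₀ hq]
  congr 1
  push_cast
  ring

/-- The partial sum `∑_{k < b} q ^ (-ρ_k) α_k β_{k'}` of the bilinear form with matrix `J`. -/
def partialForm (n : ℕ) (v : K) (α β : ℕ → A) (b : ℕ) : A :=
  ∑ k ∈ Finset.Ico 1 b, v ^ (-twoRho n k) • (α k * β (n + 1 - k))

theorem partialForm_one (α β : ℕ → A) : partialForm n v α β 1 = 0 :=
  rfl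

theorem partialForm_succ (α β : ℕ → A) {b : ℕ} (hb : 1 ≤ b) :
    partialForm n v α β (b + 1) =
      partialForm n v α β b + v ^ (-twoRho n b) • (α b * β (n + 1 - b)) :=
  Finset.sum_Ico_succ_top hb _

theorem commute_partialForm {α β : ℕ → A} {y : A} (hα : ∀ k, Commute y (α k))
    (hβ : ∀ k, Commute y (β k)) (b : ℕ) : Commute y (partialForm n v α β b) :=
  Commute.sum_right _ _ _ fun _ _ ↦ ((hα _).mul_right (hβ _)).smul_right _

/-- The entries of `α` satisfy the relations of the quantum Euclidean space, on the isotropic cone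
of its quadratic form `partialForm n v α α (n + 1)`. -/
structure IsQuantumVector (n : ℕ) (q v : K) (α : ℕ → A) : Prop where
  mul_of_lt {a b : ℕ} (ha : 1 ≤ a) (hab : a < b) (hb : b ≤ n) (h : a + b ≠ n + 1) :
    α a * α b = q • (α b * α a)
  reflect_mul {b : ℕ} (hb : 1 ≤ b) (hbn : 2 * b < n + 1) :
    α (n + 1 - b) * α b = v ^ ((n : ℤ) - 2 * b) •
      ((q ^ 2)⁻¹ • partialForm n v α α (b + 1) - partialForm n v α α b)
  isotropic : partialForm n v α α (n + 1) = 0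

theorem mul_reflect (hv : v ≠ 0) (α : ℕ → A) {b : ℕ} (hb : 1 ≤ b) (hbn : 2 * b < n + 1) :
    α b * α (n + 1 - b) = v ^ ((n : ℤ) - 2 * b) •
      (partialForm n v α α (b + 1) - partialForm n v α α b) := by
  rw [partialForm_succ α α hb, add_sub_cancel_left, twoRho_of_lt hbn, smul_smul,
    ← zpow_add₀ hv, add_neg_cancel, zpow_zero, one_smul]

namespace IsQuantumVector

variable {α : ℕ → A}

theorem commute_partialForm (h : IsQuantumVector n q v α) (hq : q ≠ 0) {b m : ℕ} (hbm : b ≤ m)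
    (hm : m ≤ n + 1 - b) : Commute (partialForm n v α α b) (α m) := by
  refine Commute.sum_left _ _ _ fun k hk ↦ Commute.smul_left ?_ _
  obtain ⟨hk, hkb⟩ := Finset.mem_Ico.1 hk
  have left := h.mul_of_lt (a := k) (b := m) hk (by omega) (by omega) (by omega)
  have right := h.mul_of_lt (a := m) (b := n + 1 - k) (by omega) (by omega) (by omega) (by omega)
  change α k * α (n + 1 - k) * α m = α m * (α k * α (n + 1 - k))
  rw [mul_assoc, mul_eq_inv_smul hq right, mul_smul_comm, ← mul_assoc, left, smul_mul_assoc,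
    inv_smul_smul₀ hq, mul_assoc]

theorem mul_partialForm_succ (h : IsQuantumVector n q v α) (hv : v ≠ 0) (hq : q ≠ 0) {b : ℕ}
    (hb : 1 ≤ b) (hbn : 2 * b < n + 1) :
    α b * partialForm n v α α (b + 1) = q ^ 2 • (partialForm n v α α (b + 1) * α b) := by
  have hcomm := (h.commute_partialForm hq (b := b) le_rfl (by omega)).eq
  rw [eq_comm, ← eq_inv_smul_iff₀ (pow_ne_zero 2 hq)]
  calc partialForm n v α α (b + 1) * α b
      = partialForm n v α α b * α b + v ^ (-twoRho n b) • (α b * (α (n + 1 - b) * α b)) := by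
        rw [partialForm_succ α α hb, add_mul, smul_mul_assoc, mul_assoc]
    _ = (q ^ 2)⁻¹ • (α b * partialForm n v α α (b + 1)) := by
        rw [h.reflect_mul hb hbn, hcomm, mul_smul_comm, smul_smul, twoRho_of_lt hbn,
          ← zpow_add₀ hv, neg_add_cancel, zpow_zero, one_smul, mul_sub, mul_smul_comm]
        abel

theorem partialForm_succ_mul (h : IsQuantumVector n q v α) (hv : v ≠ 0) (hq : q ≠ 0) {b : ℕ}
    (hb : 1 ≤ b) (hbn : 2 * b < n + 1) :
    partialForm n v α α (b + 1) * α (n + 1 - b) =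
      q ^ 2 • (α (n + 1 - b) * partialForm n v α α (b + 1)) := by
  have hcomm := (h.commute_partialForm hq (b := b) (m := n + 1 - b) (by omega) le_rfl).eq
  rw [eq_comm, ← eq_inv_smul_iff₀ (pow_ne_zero 2 hq)]
  calc α (n + 1 - b) * partialForm n v α α (b + 1)
      = α (n + 1 - b) * partialForm n v α α b +
          v ^ (-twoRho n b) • (α (n + 1 - b) * α b * α (n + 1 - b)) := by
        rw [partialForm_succ α α hb, mul_add, mul_smul_comm, mul_assoc]
    _ = (q ^ 2)⁻¹ • (partialForm n v α α (b + 1) * α (n + 1 - b)) := by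
        rw [h.reflect_mul hb hbn, ← hcomm, smul_mul_assoc, smul_smul, twoRho_of_lt hbn,
          ← zpow_add₀ hv, neg_add_cancel, zpow_zero, one_smul, sub_mul, smul_mul_assoc]
        abel

theorem isWeylPair (h : IsQuantumVector n q v α) (hv : v ≠ 0) (hq : q ≠ 0) {b : ℕ} (hb : 1 ≤ b)
    (hbn : 2 * b < n + 1) :
    IsWeylPair (q ^ 2) (α b) (α (n + 1 - b))
      ![-(v ^ ((n : ℤ) - 2 * b) • partialForm n v α α b),
        (v ^ ((n : ℤ) - 2 * b) * (q ^ 2)⁻¹) • partialForm n v α α (b + 1)] := by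
  have comm {m : ℕ} := h.commute_partialForm hq (b := b) (m := m)
  have comm_succ : Commute (partialForm n v α α b) (partialForm n v α α (b + 1)) := by
    rw [partialForm_succ α α hb]
    exact (Commute.refl _).add_right (((comm le_rfl (by omega)).mul_right
      (comm (by omega) le_rfl)).smul_right _)
  constructor
  · rw [h.reflect_mul hb hbn, Fin.sum_univ_two]
    simp only [Matrix.cons_val_zero, Matrix.cons_val_one, Matrix.cons_val_fin_one, smul_sub,
      smul_smul]
    abel
  · rw [mul_reflect hv α hb hbn, Fin.sum_univ_two]
    simp only [Matrix.cons_val_zero, Matrix.cons_val_one, Matrix.cons_val_fin_one,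
      Fin.coe_ofNat_eq_mod, Nat.zero_mod, Nat.mod_succ, pow_zero, pow_one, one_mul, smul_sub,
      smul_neg, smul_smul, mul_left_comm (q ^ 2), mul_inv_cancel₀ (pow_ne_zero 2 hq), mul_one]
    abel
  · rw [Fin.forall_fin_two]
    simp [(comm le_rfl (by omega)).eq, h.mul_partialForm_succ hv hq hb hbn, smul_comm (q ^ 2)]
  · rw [Fin.forall_fin_two]
    simp [(comm (m := n + 1 - b) (by omega) le_rfl).eq, h.partialForm_succ_mul hv hq hb hbn,
      smul_comm (q ^ 2)]
  · simp [Fin.forall_fin_two, comm_succ, comm_succ.symm, Commute.smul_left, Commute.smul_right]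

theorem partialForm_reflect (h : IsQuantumVector n q v α) (hv : v ≠ 0) (hvq : v ^ 2 = q) {b : ℕ}
    (hb : 1 ≤ b) (hbn : 2 * b ≤ n + 1) :
    partialForm n v α α (n + 2 - b) = -(q ^ ((n : ℤ) - 2 * b) • partialForm n v α α b) := by
  induction b, hb using Nat.le_induction with
  | base => rw [partialForm_one, smul_zero, neg_zero]; exact h.isotropic
  | succ b hb ih =>
    have hq : q ≠ 0 := hvq ▸ pow_ne_zero 2 hv
    have top : partialForm n v α α (n + 2 - b) = partialForm n v α α (n + 2 - (b + 1)) +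
        v ^ ((n : ℤ) - 2 * b) • (α (n + 1 - b) * α b) := by
      rw [show n + 2 - b = n + 1 - b + 1 by omega, partialForm_succ α α (by omega),
        twoRho_reflect (by omega), twoRho_of_lt (by omega), neg_neg,
        show n + 1 - (n + 1 - b) = b by omega, show n + 2 - (b + 1) = n + 1 - b by omega]
    have square : v ^ ((n : ℤ) - 2 * b) * v ^ ((n : ℤ) - 2 * b) = q ^ ((n : ℤ) - 2 * b) := by
      rw [← mul_zpow, ← pow_two, hvq]
    rw [ih (by omega), h.reflect_mul hb (by omega), smul_smul, square, smul_sub, smul_smul,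
      ← zpow_sub_two_mul_succ hq] at top
    rw [eq_comm, neg_eq_iff_add_eq_zero, add_comm]
    rwa [← sub_eq_zero, ← neg_eq_zero, neg_sub, sub_neg_eq_add, add_assoc, sub_add_cancel]
      at top

theorem center_sq (h : IsQuantumVector n q v α) (hv : v ≠ 0) (hvq : v ^ 2 = q) {c : ℕ}
    (hc : 2 * c = n + 1) : α c ^ 2 = -((1 + q⁻¹) • partialForm n v α α c) := by
  have reflect := h.partialForm_reflect hv hvq (b := c) (by omega) hc.le
  rw [show n + 2 - c = c + 1 by omega, partialForm_succ α α (by omega),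
    show n + 1 - c = c by omega, twoRho, if_neg (by omega), if_pos hc,
    show (n : ℤ) - 2 * c = -1 by omega, neg_zero, zpow_zero, one_smul, zpow_neg_one] at reflect
  rw [pow_two, eq_sub_of_add_eq' reflect]
  module

end IsQuantumVector

theorem sum_Icc_reflect {M : Type*} [AddCommMonoid M] {b : ℕ} (hbn : 2 * b < n + 1) (f : ℕ → M) :
    ∑ k ∈ Finset.Icc b (n + 1 - b), f k =
      f b + ∑ k ∈ Finset.Icc (b + 1) (n + 1 - (b + 1)), f k + f (n + 1 - b) := by
  have split : Finset.Icc b (n + 1 - b) =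
      insert b (insert (n + 1 - b) (Finset.Icc (b + 1) (n + 1 - (b + 1)))) := by
    ext m
    simp only [Finset.mem_insert, Finset.mem_Icc]
    omega
  rw [split, Finset.sum_insert, Finset.sum_insert, add_comm (f (n + 1 - b)), add_assoc]
  · rw [Finset.mem_Icc]; omega
  · rw [Finset.mem_insert, Finset.mem_Icc]; omega

end QuantumVector

section PowSum

variable {K A : Type*} [Field K] [Ring A] [Algebra K A] {n N : ℕ} {q v : K} {α β : ℕ → A}

namespace IsQuantumVector

theorem mul_mul_mul_of_lt (hα : IsQuantumVector n q v α) (hβ : IsQuantumVector n q v β)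
    (hαβ : ∀ k l, Commute (α k) (β l)) {a b : ℕ} (ha : 1 ≤ a) (hab : a < b) (hb : b ≤ n)
    (h : a + b ≠ n + 1) : (α a * β a) * (α b * β b) = q ^ 2 • ((α b * β b) * (α a * β a)) := by
  rw [pow_two]
  exact mul_mul_mul_eq_smul (hα.mul_of_lt ha hab hb h) (hβ.mul_of_lt ha hab hb h)
    (hαβ b a).symm (hαβ a b).symm

theorem isWeylPair_mul (hα : IsQuantumVector n q v α) (hβ : IsQuantumVector n q v β)
    (hαβ : ∀ k l, Commute (α k) (β l)) (hv : v ≠ 0) (hvq : v ^ 2 = q) {b : ℕ} (hb : 1 ≤ b)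
    (hbn : 2 * b < n + 1) :
    let κ := q ^ ((n : ℤ) - 2 * b)
    let ω := partialForm n v α α
    let ω' := partialForm n v β β
    IsWeylPair (q ^ 2) (α b * β b) (α (n + 1 - b) * β (n + 1 - b))
      ![κ • (ω b * ω' b),
        -((κ * (q ^ 2)⁻¹) • (ω b * ω' (b + 1) + ω (b + 1) * ω' b)),
        (κ * (q ^ 2)⁻¹ * (q ^ 2)⁻¹) • (ω (b + 1) * ω' (b + 1))] := by
  intro κ ω ω'
  have hq : q ≠ 0 := hvq ▸ pow_ne_zero 2 hv
  have hκ : κ = v ^ ((n : ℤ) - 2 * b) * v ^ ((n : ℤ) - 2 * b) := by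
    rw [← mul_zpow, ← pow_two, hvq]
  have hαω' (k j) : Commute (α k) (ω' j) := SOq.commute_partialForm (hαβ k) (hαβ k) j
  have hωβ (j k) : Commute (ω j) (β k) :=
    (SOq.commute_partialForm (fun l ↦ (hαβ l k).symm) (fun l ↦ (hαβ l k).symm) j).symm
  have hωω' (j k) : Commute (ω j) (ω' k) := SOq.commute_partialForm (hωβ j) (hωβ j) k
  have pair := (hα.isWeylPair hv hq hb hbn).mul (hβ.isWeylPair hv hq hb hbn) (by
    simp only [Set.forall_mem_insert, Set.forall_mem_range, Fin.forall_fin_two,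
      Matrix.cons_val_zero, Matrix.cons_val_one]
    simp only [hαβ, hαω', hωβ, hωω', ω, ω', Commute.neg_left_iff, Commute.neg_right_iff,
      Commute.smul_left, Commute.smul_right, and_self])
  convert pair using 1
  rw [funext_iff, Fin.forall_fin_succ, Fin.forall_fin_two]
  refine ⟨?_, ?_, ?_⟩ <;>
  · simp only [Matrix.cons_val_zero, Matrix.cons_val_one, Matrix.cons_val_succ, neg_mul, mul_neg,
      smul_mul_smul_comm, hκ]
    module

theorem commute_sum_mul_partialForm (hα : IsQuantumVector n q v α) (hq : q ≠ 0)
    (hαβ : ∀ k l, Commute (α k) (β l)) {a b : ℕ} (hba : b ≤ a) :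
    Commute (∑ k ∈ Finset.Icc a (n + 1 - a), α k * β k) (partialForm n v α α b) := by
  refine Commute.sum_left _ _ _ fun k hk ↦ ?_
  rw [Finset.mem_Icc] at hk
  exact (hα.commute_partialForm hq (by omega) (by omega)).symm.mul_left
    (SOq.commute_partialForm (fun l ↦ (hαβ l k).symm) (fun l ↦ (hαβ l k).symm) b)

theorem dicksonEval_sum_mul_of_lt (hα : IsQuantumVector n q v α) (hβ : IsQuantumVector n q v β)
    (hαβ : ∀ k l, Commute (α k) (β l)) (hN : Odd N) (hq : IsPrimitiveRoot q N) (hvq : v ^ 2 = q)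
    {b : ℕ} (hb : 1 ≤ b) (hbn : 2 * b < n + 1) :
    dicksonEval (∑ k ∈ Finset.Icc b (n + 1 - b), α k * β k)
        (q ^ ((n : ℤ) - 2 * b) • (partialForm n v α α b * partialForm n v β β b)) N =
      (α b * β b) ^ N + (α (n + 1 - b) * β (n + 1 - b)) ^ N +
        dicksonEval (∑ k ∈ Finset.Icc (b + 1) (n + 1 - (b + 1)), α k * β k)
          (q ^ ((n : ℤ) - 2 * (b + 1 : ℕ)) •
            (partialForm n v α α (b + 1) * partialForm n v β β (b + 1))) N := by
  have hq0 : q ≠ 0 := hq.ne_zero hN.pos.ne'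
  have hv : v ≠ 0 := pow_ne_zero_iff two_ne_zero |>.1 (hvq ▸ hq0)
  have pair := hα.isWeylPair_mul hβ hαβ hv hvq hb hbn
  set S := ∑ k ∈ Finset.Icc (b + 1) (n + 1 - (b + 1)), α k * β k with hS
  have lower : α b * β b * S = q ^ 2 • (S * (α b * β b)) := by
    rw [hS, Finset.mul_sum, Finset.sum_mul, Finset.smul_sum]
    refine Finset.sum_congr rfl fun k hk ↦ ?_
    rw [Finset.mem_Icc] at hk
    exact hα.mul_mul_mul_of_lt hβ hαβ hb (by omega) (by omega) (by omega)
  have upper : S * (α (n + 1 - b) * β (n + 1 - b)) =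
      q ^ 2 • (α (n + 1 - b) * β (n + 1 - b) * S) := by
    rw [hS, Finset.mul_sum, Finset.sum_mul, Finset.smul_sum]
    refine Finset.sum_congr rfl fun k hk ↦ ?_
    rw [Finset.mem_Icc] at hk
    exact hα.mul_mul_mul_of_lt hβ hαβ (by omega) (by omega) (by omega) (by omega)
  have hSω {j : ℕ} : j ≤ b + 1 → Commute S (partialForm n v α α j) :=
    hα.commute_sum_mul_partialForm hq0 hαβ
  have hSω' {j : ℕ} (hj : j ≤ b + 1) : Commute S (partialForm n v β β j) := by
    simp only [hS, (hαβ _ _).eq]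
    exact hβ.commute_sum_mul_partialForm hq0 (fun k l ↦ (hαβ l k).symm) hj
  have commute_coeff {j l : ℕ} (hj : j ≤ b + 1) (hl : l ≤ b + 1) :
      Commute S (partialForm n v α α j * partialForm n v β β l) :=
    (hSω hj).mul_right (hSω' hl)
  have hb' : b ≤ b + 1 := b.le_succ
  have peel := pair.dicksonEval_add hN (hq.pow_of_coprime 2 (Nat.coprime_two_left.2 hN)) lower
    upper (Fin.forall_fin_succ.2 ⟨(commute_coeff hb' hb').smul_right _, Fin.forall_fin_two.2
      ⟨(((commute_coeff hb' le_rfl).add_right (commute_coeff le_rfl hb')).smul_right _).neg_right,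
        (commute_coeff le_rfl le_rfl).smul_right _⟩⟩)
  have shift : q ^ 2 * (q ^ ((n : ℤ) - 2 * b) * (q ^ 2)⁻¹ * (q ^ 2)⁻¹) =
      q ^ ((n : ℤ) - 2 * (b + 1 : ℕ)) := by
    rw [zpow_sub_two_mul_succ hq0, mul_comm, inv_mul_cancel_right₀ (pow_ne_zero 2 hq0)]
  rw [sum_Icc_reflect hbn]
  simpa only [Matrix.cons_val_zero, Matrix.cons_val, smul_smul, shift] using peel

theorem dicksonEval_mul_of_center (hα : IsQuantumVector n q v α) (hβ : IsQuantumVector n q v β)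
    (hαβ : ∀ k l, Commute (α k) (β l)) (hN : Odd N) (hN1 : 1 < N) (hq : IsPrimitiveRoot q N)
    (hvq : v ^ 2 = q) {c : ℕ} (hc : 2 * c = n + 1) :
    dicksonEval (α c * β c)
        (q ^ ((n : ℤ) - 2 * c) • (partialForm n v α α c * partialForm n v β β c)) N =
      (2 / (1 + q) ^ N) • (α c * β c) ^ N := by
  have hq0 : q ≠ 0 := hq.ne_zero hN.pos.ne'
  have hv : v ≠ 0 := pow_ne_zero_iff two_ne_zero |>.1 (hvq ▸ hq0)
  have hq1 : 1 + q ≠ 0 := by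
    intro h
    have square : q ^ 2 = 1 := by linear_combination (q - 1) * h
    have := Nat.le_of_dvd two_pos (hq.dvd_of_pow_eq_one 2 square)
    obtain rfl : N = 2 := by omega
    exact absurd hN (by decide)
  have sq : (α c * β c) ^ 2 =
      (1 + q⁻¹) ^ 2 • (partialForm n v α α c * partialForm n v β β c) := by
    rw [(hαβ c c).mul_pow, hα.center_sq hv hvq hc, hβ.center_sq hv hvq hc, neg_mul_neg,
      smul_mul_smul_comm, pow_two]
  have coeff : q ^ ((n : ℤ) - 2 * c) • (partialForm n v α α c * partialForm n v β β c) =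
      ((1 / (1 + q)) * (q / (1 + q))) • (α c * β c) ^ 2 := by
    rw [sq, smul_smul, show (n : ℤ) - 2 * c = -1 by omega, zpow_neg_one]
    congr 1
    field_simp
    ring
  rw [coeff, dicksonEval_smul_sq _ (by field_simp), div_pow, div_pow, one_pow, hq.pow_eq_one,
    ← add_div, one_add_one_eq_two]

/-- Peeling off the outermost terms `k = b` and `k = b'` of the sum of the `α_k β_k` is an instance
of `IsWeylPair.dicksonEval_add`; the second argument of `dicksonEval` vanishes at `b = 1`. -/
theorem dicksonEval_sum_mul (hα : IsQuantumVector n q v α) (hβ : IsQuantumVector n q v β)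
    (hαβ : ∀ k l, Commute (α k) (β l)) (hN : Odd N) (hN1 : 1 < N) (hq : IsPrimitiveRoot q N)
    (hvq : v ^ 2 = q) {b : ℕ} (hb : 1 ≤ b) :
    dicksonEval (∑ k ∈ Finset.Icc b (n + 1 - b), α k * β k)
        (q ^ ((n : ℤ) - 2 * b) • (partialForm n v α α b * partialForm n v β β b)) N =
      ∑ k ∈ Finset.Icc b (n + 1 - b),
        (if 2 * k = n + 1 then 2 / (1 + q) ^ N else 1 : K) • (α k * β k) ^ N := by
  rcases lt_trichotomy (2 * b) (n + 1) with hlt | hc | hgt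
  · rw [hα.dicksonEval_sum_mul_of_lt hβ hαβ hN hq hvq hb hlt,
      dicksonEval_sum_mul hα hβ hαβ hN hN1 hq hvq (by omega), sum_Icc_reflect hlt,
      if_neg hlt.ne, if_neg (by omega), one_smul, one_smul]
    abel
  · rw [show n + 1 - b = b by omega, Finset.Icc_self, Finset.sum_singleton, Finset.sum_singleton,
      if_pos hc]
    exact hα.dicksonEval_mul_of_center hβ hαβ hN hN1 hq hvq hc
  · rw [Finset.Icc_eq_empty (by omega), Finset.sum_empty, Finset.sum_empty,
      dicksonEval_zero_left _ hN]
termination_by n + 2 - b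

theorem sum_mul_pow (hα : IsQuantumVector n q v α) (hβ : IsQuantumVector n q v β)
    (hαβ : ∀ k l, Commute (α k) (β l)) (hN : Odd N) (hN1 : 1 < N) (hq : IsPrimitiveRoot q N)
    (hvq : v ^ 2 = q) :
    (∑ k ∈ Finset.Icc 1 n, α k * β k) ^ N =
      ∑ k ∈ Finset.Icc 1 n,
        (if 2 * k = n + 1 then 2 / (1 + q) ^ N else 1 : K) • (α k * β k) ^ N := by
  have outermost := hα.dicksonEval_sum_mul hβ hαβ hN hN1 hq hvq le_rfl
  rwa [partialForm_one, zero_mul, smul_zero, Nat.add_sub_cancel,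
    dicksonEval_zero_right _ hN.pos.ne'] at outermost

end IsQuantumVector

end PowSum

/-! ### The middle row -/

section MiddleRow

theorem sum_sum_congr_of_add_swap {M : Type*} [AddCommMonoid M] {s : Finset ℕ} {f g : ℕ → ℕ → M}
    (diag : ∀ a ∈ s, f a a = g a a)
    (swap : ∀ a ∈ s, ∀ c ∈ s, a < c → f a c + f c a = g a c + g c a) :
    ∑ a ∈ s, ∑ c ∈ s, f a c = ∑ a ∈ s, ∑ c ∈ s, g a c := by
  induction s using Finset.induction_on_min with
  | empty => rfl
  | insert b s hb ih =>
    have hbs : b ∉ s := fun h ↦ (hb b h).false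
    have split (f : ℕ → ℕ → M) : ∑ a ∈ insert b s, ∑ c ∈ insert b s, f a c =
        f b b + ∑ c ∈ s, (f b c + f c b) + ∑ a ∈ s, ∑ c ∈ s, f a c := by
      simp only [Finset.sum_insert hbs, Finset.sum_add_distrib]
      abel
    rw [split, split, diag b (Finset.mem_insert_self b s),
      Finset.sum_congr rfl fun c hc ↦ swap b (Finset.mem_insert_self b s) c
        (Finset.mem_insert_of_mem hc) (hb c hc),
      ih (fun a ha ↦ diag a (Finset.mem_insert_of_mem ha)) fun a ha c hc ↦
        swap a (Finset.mem_insert_of_mem ha) c (Finset.mem_insert_of_mem hc)]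

variable {K A : Type*} [Field K] [Ring A] [Algebra K A] {N : ℕ} {q : K} {s : Finset ℕ}
  {p r : ℕ → A} {W : ℕ → ℕ → A}

/-- The commutation relations between the entries `p k` of the middle row of a quantum orthogonal
matrix, in the columns `k ∈ s`: these commute up to corrections `W`. -/
structure IsMiddleRow (q : K) (s : Finset ℕ) (p : ℕ → A) (W : ℕ → ℕ → A) : Prop where
  mul_of_lt {b a : ℕ} (hb : b ∈ s) (ha : a ∈ s) (hba : b < a) :
    p b * p a = p a * p b - (q - q⁻¹) • W b a
  mul_correction {b a : ℕ} (hb : b ∈ s) (ha : a ∈ s) (hba : b < a) :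
    p b * W b a = q • (W b a * p b)
  correction_mul {b a : ℕ} (hb : b ∈ s) (ha : a ∈ s) (hba : b < a) :
    W b a * p a = q • (p a * W b a)
  commute_correction {b a c : ℕ} (hb : b ∈ s) (ha : a ∈ s) (hc : c ∈ s) (hba : b < a)
    (hac : a < c) : Commute (W b c) (p a)
  correction_mul_of_lt {b a c : ℕ} (hb : b ∈ s) (ha : a ∈ s) (hc : c ∈ s) (hba : b < a)
    (hac : a < c) : W b a * p c = p c * W b a + (q - q⁻¹) • (p a * W b c)

namespace IsMiddleRow

theorem mono {t : Finset ℕ} (h : IsMiddleRow q s p W) (hts : t ⊆ s) : IsMiddleRow q t p W where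
  mul_of_lt hb ha := h.mul_of_lt (hts hb) (hts ha)
  mul_correction hb ha := h.mul_correction (hts hb) (hts ha)
  correction_mul hb ha := h.correction_mul (hts hb) (hts ha)
  commute_correction hb ha hc := h.commute_correction (hts hb) (hts ha) (hts hc)
  correction_mul_of_lt hb ha hc := h.correction_mul_of_lt (hts hb) (hts ha) (hts hc)

theorem mul_mul_mul (h : IsMiddleRow q s p W) (hpr : ∀ a b, Commute (p a) (r b)) {b a : ℕ}
    (hb : b ∈ s) (ha : a ∈ s) (hba : b < a) (hr : r b * r a = q • (r a * r b)) :
    (p b * r b) * (p a * r a) =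
      q • ((p a * r a) * (p b * r b)) + -((q - q⁻¹) * q) • (W b a * (r a * r b)) := by
  rw [(hpr a b).symm.mul_mul_mul_comm, (hpr b a).symm.mul_mul_mul_comm, h.mul_of_lt hb ha hba, hr,
    sub_mul, smul_mul_assoc, mul_smul_comm, mul_smul_comm]
  module

theorem mul_mul_correction_mul (h : IsMiddleRow q s p W) (hpr : ∀ a b, Commute (p a) (r b))
    (hWr : ∀ a b c, Commute (W a b) (r c)) {b a : ℕ} (hb : b ∈ s) (ha : a ∈ s) (hba : b < a)
    (hr : r b * r a = q • (r a * r b)) :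
    (p b * r b) * (W b a * (r a * r b)) = q ^ 2 • ((W b a * (r a * r b)) * (p b * r b)) := by
  rw [pow_two]
  refine mul_mul_mul_eq_smul (h.mul_correction hb ha hba) ?_ (hWr b a b).symm
    ((hpr b a).mul_right (hpr b b)).symm
  rw [← mul_assoc, hr, smul_mul_assoc]

theorem correction_mul_mul_self (h : IsMiddleRow q s p W) (hpr : ∀ a b, Commute (p a) (r b))
    (hWr : ∀ a b c, Commute (W a b) (r c)) {b a : ℕ} (hb : b ∈ s) (ha : a ∈ s) (hba : b < a)
    (hr : r b * r a = q • (r a * r b)) :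
    (W b a * (r a * r b)) * (p a * r a) = q ^ 2 • ((p a * r a) * (W b a * (r a * r b))) := by
  rw [pow_two]
  refine mul_mul_mul_eq_smul (h.correction_mul hb ha hba) ?_
    ((hpr a a).mul_right (hpr a b)).symm (hWr b a a).symm
  rw [mul_assoc, hr, mul_smul_comm]

theorem correction_mul_mul_swap (h : IsMiddleRow q s p W) (hq : q ≠ 0)
    (hr : ∀ b ∈ s, ∀ a ∈ s, b < a → r b * r a = q • (r a * r b))
    (hpr : ∀ a b, Commute (p a) (r b)) (hWr : ∀ a b c, Commute (W a b) (r c)) {b a c : ℕ}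
    (hb : b ∈ s) (ha : a ∈ s) (hc : c ∈ s) (hba : b < a) (hac : a < c) :
    (W b a * (r a * r b)) * (p c * r c) + (W b c * (r c * r b)) * (p a * r a) =
      q ^ 2 • ((p c * r c) * (W b a * (r a * r b)) + (p a * r a) * (W b c * (r c * r b))) := by
  have rrr₁ : (r a * r b) * r c = q ^ 2 • (r c * (r a * r b)) := by
    rw [mul_assoc, hr b hb c hc (hba.trans hac), mul_smul_comm, ← mul_assoc, hr a ha c hc hac,
      smul_mul_assoc, smul_smul, mul_assoc, pow_two]
  have rrr₂ : (r c * r b) * r a = q • (r c * (r a * r b)) := by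
    rw [mul_assoc, hr b hb a ha hba, mul_smul_comm]
  have rrr₃ : r a * (r c * r b) = q • (r c * (r a * r b)) := by
    rw [← mul_assoc, hr a ha c hc hac, smul_mul_assoc, mul_assoc]
  rw [((hpr c a).mul_right (hpr c b)).symm.mul_mul_mul_comm,
    ((hpr a c).mul_right (hpr a b)).symm.mul_mul_mul_comm, (hWr b a c).symm.mul_mul_mul_comm,
    (hWr b c a).symm.mul_mul_mul_comm, rrr₁, rrr₂, rrr₃,
    (h.commute_correction hb ha hc hba hac).eq, h.correction_mul_of_lt hb ha hc hba hac, add_mul]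
  simp only [smul_mul_assoc, mul_smul_comm]
  match_scalars
  · rfl
  · field_simp; ring

theorem sum_mul_pow (h : IsMiddleRow q s p W) (hN : Odd N) (hN1 : 1 < N) (hq : IsPrimitiveRoot q N)
    (hr : ∀ b ∈ s, ∀ a ∈ s, b < a → r b * r a = q • (r a * r b))
    (hpr : ∀ a b, Commute (p a) (r b)) (hWr : ∀ a b c, Commute (W a b) (r c)) :
    (∑ k ∈ s, p k * r k) ^ N = ∑ k ∈ s, (p k * r k) ^ N := by
  induction s using Finset.induction_on_min with
  | empty => rw [Finset.sum_empty, Finset.sum_empty, zero_pow hN.pos.ne']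
  | insert b s hbs ih =>
    have hb : b ∈ insert b s := Finset.mem_insert_self b s
    have sub {a : ℕ} (ha : a ∈ s) : a ∈ insert b s := Finset.mem_insert_of_mem ha
    have hrb {a : ℕ} (ha : a ∈ s) := hr b hb a (sub ha) (hbs a ha)
    have hnb : b ∉ s := fun hb ↦ (hbs b hb).false
    rw [Finset.sum_insert hnb, Finset.sum_insert hnb, ← ih (h.mono (Finset.subset_insert b s))
      fun b hb a ha ↦ hr b (sub hb) a (sub ha)]
    refine add_pow_of_q_commutator hN hN1 hq
      (C := -((q - q⁻¹) * q) • ∑ a ∈ s, W b a * (r a * r b)) ?_ ?_ ?_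
    · simp only [Finset.mul_sum, Finset.sum_mul, Finset.smul_sum, ← Finset.sum_add_distrib]
      exact Finset.sum_congr rfl fun a ha ↦ h.mul_mul_mul hpr hb (sub ha) (hbs a ha) (hrb ha)
    · rw [mul_smul_comm, smul_mul_assoc, smul_comm, Finset.mul_sum, Finset.sum_mul,
        Finset.smul_sum (r := q ^ 2)]
      exact congrArg _ (Finset.sum_congr rfl fun a ha ↦
        h.mul_mul_correction_mul hpr hWr hb (sub ha) (hbs a ha) (hrb ha))
    · rw [mul_smul_comm, smul_mul_assoc, smul_comm, Finset.sum_mul_sum, Finset.sum_mul_sum,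
        Finset.sum_comm (s := s) (t := s) (f := fun c a ↦ p c * r c * (W b a * (r a * r b)))]
      simp only [Finset.smul_sum (r := q ^ 2)]
      refine congrArg _ (sum_sum_congr_of_add_swap (fun a ha ↦
        h.correction_mul_mul_self hpr hWr hb (sub ha) (hbs a ha) (hrb ha)) fun a ha c hc hac ↦ ?_)
      rw [← smul_add]
      exact h.correction_mul_mul_swap (hq.ne_zero hN.pos.ne') hr hpr hWr hb (sub ha) (sub hc)
        (hbs a ha) hac

end IsMiddleRow

end MiddleRow

/-! ### Quantum orthogonal matrices -/

section QuantumOrthogonal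

section FRTSide

variable {K M : Type*} [Field K] [AddCommGroup M] [Module K M] {n i j : ℕ} {q v : K} {s t u : M}

/-- The common shape of the two sides of an FRT relation: the sum `∑ R^{lk}_{ij} • f k l`, where
`s = f j i`, `t = f i j` and `u = ∑_{k < j} q ^ (-ρ_k) • f k k'`. -/
def frtSide (n : ℕ) (q v : K) (i j : ℕ) (s t u : M) : M :=
  q ^ ((if i = j then 1 else 0) - (if j = n + 1 - i then 1 else 0) : ℤ) • s +
    (if i < j then (q - q⁻¹) • t else 0) -
    if j = n + 1 - i then ((q - q⁻¹) * v ^ (-twoRho n i)) • u else 0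

theorem frtSide_of_lt (hij : i < j) (h : i + j ≠ n + 1) :
    frtSide n q v i j s t u = s + (q - q⁻¹) • t := by
  rw [frtSide, if_neg hij.ne, if_neg (by omega), if_pos hij, if_neg (by omega), sub_self, zpow_zero,
    one_smul, sub_zero]

theorem frtSide_of_gt (hji : j < i) (hi : i ≤ n) (h : i + j ≠ n + 1) :
    frtSide n q v i j s t u = s := by
  rw [frtSide, if_neg hji.ne', if_neg (by omega), if_neg hji.not_gt, if_neg (by omega), sub_self,
    zpow_zero, one_smul, add_zero, sub_zero]

theorem frtSide_self (h : 2 * i ≠ n + 1) (hi : i ≤ n) : frtSide n q v i i s t u = q • s := by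
  rw [frtSide, if_pos rfl, if_neg (by omega), if_neg (lt_irrefl i), if_neg (by omega), sub_zero,
    sub_zero, zpow_one, add_zero]

theorem frtSide_self_of_middle (h : 2 * i = n + 1) :
    frtSide n q v i i s t u = s - (q - q⁻¹) • u := by
  rw [frtSide, if_pos rfl, if_pos (by omega), if_neg (lt_irrefl i), if_pos (by omega), sub_self,
    zpow_zero, one_smul, add_zero, twoRho, if_neg (by omega), if_pos h, neg_zero, zpow_zero,
    mul_one]

theorem frtSide_reflect (h : 2 * i < n + 1) :
    frtSide n q v (n + 1 - i) i s t u = q⁻¹ • s - ((q - q⁻¹) * v ^ ((n : ℤ) - 2 * i)) • u := by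
  rw [frtSide, if_neg (by omega), if_pos (by omega), if_neg (by omega), if_pos (by omega), zero_sub,
    zpow_neg_one, add_zero, twoRho_reflect (by omega), neg_neg, twoRho_of_lt h]

end FRTSide

variable {K A : Type*} [Field K] [Ring A] [Algebra K A] {n : ℕ} {q v : K} {x : ℕ → ℕ → A}

/-- The entries of the matrix `x` satisfy the FRT relations, and every row and every column other
than the middle ones is isotropic for the form with matrix `J`. -/
structure IsQuantumOrthogonal (n : ℕ) (q v : K) (x : ℕ → ℕ → A) : Prop where
  frt {i b j a : ℕ} (hi : i ∈ Finset.Icc 1 n) (hb : b ∈ Finset.Icc 1 n) (hj : j ∈ Finset.Icc 1 n)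
    (ha : a ∈ Finset.Icc 1 n) :
    frtSide n q v a b (x i b * x j a) (x i a * x j b) (partialForm n v (x i) (x j) b) =
      frtSide n q v i j (x j a * x i b) (x i a * x j b)
        (partialForm n v (x · a) (x · b) j)
  isotropic_row {i : ℕ} (hi : i ∈ Finset.Icc 1 n) (h : 2 * i ≠ n + 1) :
    partialForm n v (x i) (x i) (n + 1) = 0
  isotropic_col {j : ℕ} (hj : j ∈ Finset.Icc 1 n) (h : 2 * j ≠ n + 1) :
    partialForm n v (x · j) (x · j) (n + 1) = 0

namespace IsQuantumOrthogonal

theorem transpose (h : IsQuantumOrthogonal n q v x) :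
    IsQuantumOrthogonal n q v fun i j ↦ x j i where
  frt hi hb hj ha := (h.frt ha hj hb hi).symm
  isotropic_row := h.isotropic_col
  isotropic_col := h.isotropic_row

theorem map {B : Type*} [Ring B] [Algebra K B] (h : IsQuantumOrthogonal n q v x) (f : A →ₐ[K] B) :
    IsQuantumOrthogonal n q v fun i j ↦ f (x i j) where
  frt hi hb hj ha := by
    have := congrArg f (h.frt hi hb hj ha)
    simpa only [frtSide, partialForm, map_add, map_sub, map_sum, map_smul, map_mul, apply_ite f,
      map_zero] using this
  isotropic_row hi hii := by
    simpa only [partialForm, map_sum, map_smul, map_mul, map_zero] using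
      congrArg f (h.isotropic_row hi hii)
  isotropic_col hj hjj := by
    simpa only [partialForm, map_sum, map_smul, map_mul, map_zero] using
      congrArg f (h.isotropic_col hj hjj)

theorem commute_of_lt (h : IsQuantumOrthogonal n q v x) {i j a b : ℕ} (hi : 1 ≤ i) (hij : i < j)
    (hj : j ≤ n) (ha : 1 ≤ a) (hab : a < b) (hb : b ≤ n) (hij' : i + j ≠ n + 1)
    (hab' : a + b ≠ n + 1) : Commute (x i b) (x j a) := by
  have rel := h.frt (i := i) (b := b) (j := j) (a := a) (Finset.mem_Icc.2 (by omega))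
    (Finset.mem_Icc.2 (by omega)) (Finset.mem_Icc.2 (by omega)) (Finset.mem_Icc.2 (by omega))
  rw [frtSide_of_lt hab hab', frtSide_of_lt hij hij'] at rel
  exact add_right_cancel rel

theorem mul_of_lt_of_lt (h : IsQuantumOrthogonal n q v x) {i j a b : ℕ} (hi : 1 ≤ i) (hij : i < j)
    (hj : j ≤ n) (ha : 1 ≤ a) (hab : a < b) (hb : b ≤ n) (hij' : i + j ≠ n + 1)
    (hab' : a + b ≠ n + 1) :
    x i a * x j b = x j b * x i a + (q - q⁻¹) • (x i b * x j a) := by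
  have rel := h.frt (i := i) (b := a) (j := j) (a := b) (Finset.mem_Icc.2 (by omega))
    (Finset.mem_Icc.2 (by omega)) (Finset.mem_Icc.2 (by omega)) (Finset.mem_Icc.2 (by omega))
  rwa [frtSide_of_gt hab hb (by omega), frtSide_of_lt hij hij'] at rel

theorem isQuantumVector_row (h : IsQuantumOrthogonal n q v x) (hq : q ≠ 0) (hv : v ≠ 0) {i : ℕ}
    (hi : i ∈ Finset.Icc 1 n) (hii : 2 * i ≠ n + 1) : IsQuantumVector n q v (x i) where
  isotropic := h.isotropic_row hi hii
  mul_of_lt {a b} ha hab hb hne := by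
    have rel := h.frt hi (b := b) (Finset.mem_Icc.2 (by omega)) hi (a := a)
      (Finset.mem_Icc.2 (by omega))
    rw [frtSide_of_lt hab hne, frtSide_self hii (Finset.mem_Icc.1 hi).2, ← eq_sub_iff_add_eq,
      ← sub_smul, sub_sub_cancel] at rel
    rw [rel, smul_inv_smul₀ hq]
  reflect_mul {b} hb hbn := by
    have rel := h.frt hi (b := b) (Finset.mem_Icc.2 (by omega)) hi (a := n + 1 - b)
      (Finset.mem_Icc.2 (by omega))
    rw [frtSide_reflect hbn, frtSide_self hii (Finset.mem_Icc.1 hi).2, mul_reflect hv (x i) hb hbn,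
      eq_comm, ← eq_inv_smul_iff₀ hq] at rel
    rw [rel]
    match_scalars
    · field_simp
    · field_simp; ring

theorem commute_middle_row_above (h : IsQuantumOrthogonal n q v x) {c k b a : ℕ}
    (hc : 2 * c = n + 1) (hk : k ∈ Finset.Ico 1 c) (hb : 1 ≤ b) (hba : b < a) (ha : a ≤ n)
    (hne : b + a ≠ n + 1) : Commute (x k a) (x c b) := by
  rw [Finset.mem_Ico] at hk
  exact h.commute_of_lt hk.1 hk.2 (by omega) hb hba ha (by omega) hne

theorem commute_middle_row_below (h : IsQuantumOrthogonal n q v x) {c k b a : ℕ}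
    (hc : 2 * c = n + 1) (hk : k ∈ Finset.Ico 1 c) (hb : 1 ≤ b) (hba : b < a) (ha : a ≤ n)
    (hne : b + a ≠ n + 1) : Commute (x c a) (x (n + 1 - k) b) := by
  rw [Finset.mem_Ico] at hk
  exact h.commute_of_lt (by omega) (by omega) (by omega) hb hba ha (by omega) hne

theorem middle_row_mul_partialForm (h : IsQuantumOrthogonal n q v x) (hq : q ≠ 0) (hv : v ≠ 0)
    {c b a : ℕ} (hc : 2 * c = n + 1) (hb : 1 ≤ b) (hba : b < a) (ha : a ≤ n)
    (hne : b + a ≠ n + 1)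
    (hz : 2 * b = n + 1 → ∀ k ∈ Finset.Ico 1 c, x k a * x (n + 1 - k) b = 0) :
    x c b * partialForm n v (x · a) (x · b) c =
      q • (partialForm n v (x · a) (x · b) c * x c b) := by
  simp only [partialForm, Finset.mul_sum, Finset.sum_mul, Finset.smul_sum, mul_smul_comm,
    smul_mul_assoc, smul_comm q]
  refine Finset.sum_congr rfl fun k hk ↦ congrArg _ ?_
  by_cases hbc : 2 * b = n + 1
  · rw [hz hbc k hk, mul_zero, zero_mul, smul_zero]
  · have col : IsQuantumVector n q v (x · b) :=
      h.transpose.isQuantumVector_row hq hv (Finset.mem_Icc.2 (by omega)) hbc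
    obtain ⟨hk1, hkc⟩ := Finset.mem_Ico.1 hk
    rw [← mul_assoc, ← (h.commute_middle_row_above hc hk hb hba ha hne).eq, mul_assoc,
      col.mul_of_lt (a := c) (by omega) (by omega) (by omega) (by omega), mul_smul_comm, mul_assoc]

theorem partialForm_mul_middle_row (h : IsQuantumOrthogonal n q v x) (hq : q ≠ 0) (hv : v ≠ 0)
    {c b a : ℕ} (hc : 2 * c = n + 1) (hb : 1 ≤ b) (hba : b < a) (ha : a ≤ n)
    (hne : b + a ≠ n + 1)
    (hz : 2 * a = n + 1 → ∀ k ∈ Finset.Ico 1 c, x k a * x (n + 1 - k) b = 0) :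
    partialForm n v (x · a) (x · b) c * x c a =
      q • (x c a * partialForm n v (x · a) (x · b) c) := by
  simp only [partialForm, Finset.mul_sum, Finset.sum_mul, Finset.smul_sum, mul_smul_comm,
    smul_mul_assoc, smul_comm q]
  refine Finset.sum_congr rfl fun k hk ↦ congrArg _ ?_
  by_cases hac : 2 * a = n + 1
  · rw [hz hac k hk, mul_zero, zero_mul, smul_zero]
  · have col : IsQuantumVector n q v (x · a) :=
      h.transpose.isQuantumVector_row hq hv (Finset.mem_Icc.2 (by omega)) hac
    obtain ⟨hk1, hkc⟩ := Finset.mem_Ico.1 hk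
    rw [mul_assoc, ← (h.commute_middle_row_below hc hk hb hba ha hne).eq, ← mul_assoc,
      col.mul_of_lt hk1 hkc (by omega) (by omega), smul_mul_assoc, mul_assoc]

theorem partialForm_mul_middle_row_of_lt (h : IsQuantumOrthogonal n q v x) {c b a d : ℕ}
    (hc : 2 * c = n + 1) (hb : 1 ≤ b) (hba : b < a) (had : a < d) (hd : d ≤ n)
    (hbd : b + d ≠ n + 1) (had' : a + d ≠ n + 1) :
    partialForm n v (x · a) (x · b) c * x c d = x c d * partialForm n v (x · a) (x · b) c +
      (q - q⁻¹) • (x c a * partialForm n v (x · d) (x · b) c) := by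
  simp only [partialForm, Finset.mul_sum, Finset.sum_mul, Finset.smul_sum, mul_smul_comm,
    smul_mul_assoc, smul_comm (q - q⁻¹), ← Finset.sum_add_distrib, ← smul_add]
  refine Finset.sum_congr rfl fun k hk ↦ congrArg _ ?_
  obtain ⟨hk1, hkc⟩ := Finset.mem_Ico.1 hk
  have above := h.commute_middle_row_above hc hk (hb.trans hba.le) had hd had'
  have below := h.commute_middle_row_below hc hk hb (hba.trans had) hd hbd
  have cross : x k a * x c d = x c d * x k a + (q - q⁻¹) • (x k d * x c a) :=
    h.mul_of_lt_of_lt hk1 hkc (by omega) (hb.trans hba.le) had hd (by omega) had'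
  rw [mul_assoc, ← below.eq, ← mul_assoc, cross, add_mul, smul_mul_assoc, mul_assoc, above.eq,
    mul_assoc]

theorem isMiddleRow (h : IsQuantumOrthogonal n q v x) (hq : q ≠ 0) (hv : v ≠ 0) {c : ℕ}
    (hc : 2 * c = n + 1) {s : Finset ℕ} (hs : s ⊆ Finset.Icc 1 n)
    (hss : ∀ b ∈ s, ∀ a ∈ s, b < a → b + a ≠ n + 1)
    (hsc : ∀ b ∈ s, ∀ a ∈ s, b < a → 2 * b = n + 1 ∨ 2 * a = n + 1 →
      ∀ k ∈ Finset.Ico 1 c, x k a * x (n + 1 - k) b = 0) :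
    IsMiddleRow q s (x c) fun b a ↦ partialForm n v (x · a) (x · b) c := by
  have pos {a : ℕ} (ha : a ∈ s) : 1 ≤ a := (Finset.mem_Icc.1 (hs ha)).1
  have le {a : ℕ} (ha : a ∈ s) : a ≤ n := (Finset.mem_Icc.1 (hs ha)).2
  constructor
  case mul_of_lt =>
    intro b a hb ha hba
    have hcn : c ∈ Finset.Icc 1 n := Finset.mem_Icc.2 (by omega)
    have rel := h.frt hcn (hs hb) hcn (hs ha)
    rwa [frtSide_of_gt hba (le ha) (add_comm a b ▸ hss b hb a ha hba),
      frtSide_self_of_middle hc] at rel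
  case mul_correction =>
    intro b a hb ha hba
    exact h.middle_row_mul_partialForm hq hv hc (pos hb) hba (le ha) (hss b hb a ha hba)
      fun hbc ↦ hsc b hb a ha hba (.inl hbc)
  case correction_mul =>
    intro b a hb ha hba
    exact h.partialForm_mul_middle_row hq hv hc (pos hb) hba (le ha) (hss b hb a ha hba)
      fun hac ↦ hsc b hb a ha hba (.inr hac)
  case commute_correction =>
    intro b a d hb ha hd hba had
    exact Commute.sum_left _ _ _ fun k hk ↦
      ((h.commute_middle_row_above hc hk (pos ha) had (le hd) (hss a ha d hd had)).mul_left
        (h.commute_middle_row_below hc hk (pos hb) hba (le ha)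
          (hss b hb a ha hba)).symm).smul_left _
  case correction_mul_of_lt =>
    intro b a d hb ha hd hba had
    exact h.partialForm_mul_middle_row_of_lt hc (pos hb) hba had (le hd)
      (hss b hb d hd (hba.trans had)) (hss a ha d hd had)

theorem sum_middle_row_mul_pow (h : IsQuantumOrthogonal n q v x) {N : ℕ} (hN : Odd N)
    (hN1 : 1 < N) (hq : IsPrimitiveRoot q N) (hv : v ≠ 0) {c : ℕ} (hc : 2 * c = n + 1)
    {s : Finset ℕ} (hs : s ⊆ Finset.Icc 1 n)
    (hss : ∀ b ∈ s, ∀ a ∈ s, b < a → b + a ≠ n + 1)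
    (hsc : ∀ b ∈ s, ∀ a ∈ s, b < a → 2 * b = n + 1 ∨ 2 * a = n + 1 →
      ∀ k ∈ Finset.Ico 1 c, x k a * x (n + 1 - k) b = 0)
    {r : ℕ → A} (hr : IsQuantumVector n q v r) (hxr : ∀ i j k, Commute (x i j) (r k)) :
    (∑ k ∈ s, x c k * r k) ^ N = ∑ k ∈ s, (x c k * r k) ^ N := by
  refine (h.isMiddleRow (hq.ne_zero hN.pos.ne') hv hc hs hss hsc).sum_mul_pow hN hN1 hq
    (fun b hb a ha hba ↦ hr.mul_of_lt ?_ hba ?_ (hss b hb a ha hba)) (hxr c)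
    fun a b k ↦ (commute_partialForm (fun i ↦ (hxr i b k).symm) (fun i ↦ (hxr i a k).symm) c).symm
  · exact (Finset.mem_Icc.1 (hs hb)).1
  · exact (Finset.mem_Icc.1 (hs ha)).2

end IsQuantumOrthogonal

end QuantumOrthogonal

/-! ### The quantum Borel algebra -/

section Borel

variable {n : ℕ} {q v : ℂ}

theorem z_of_lt {i j : ℕ} (h : j < i) : z n q v i j = 0 :=
  (RingQuot.mkAlgHom_rel ℂ (Rel.lower i j h)).trans (map_zero _)

theorem sum_Jc_smul {M : Type*} [AddCommGroup M] [Module ℂ M] {k : ℕ} (hk : k ∈ Finset.Icc 1 n)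
    (f : ℕ → M) :
    ∑ l ∈ Finset.Icc 1 n, Jc n v k l • f l = v ^ (-twoRho n k) • f (n + 1 - k) := by
  have mem : pr n k ∈ Finset.Icc 1 n := by rw [Finset.mem_Icc, pr] at *; omega
  simp only [Jc, ite_smul, zero_smul, Finset.sum_ite_eq', mem, if_true]
  rfl

theorem sum_Jc_smul' {M : Type*} [AddCommGroup M] [Module ℂ M] {l : ℕ} (hl : l ∈ Finset.Icc 1 n)
    (f : ℕ → M) :
    ∑ k ∈ Finset.Icc 1 n, Jc n v k (n + 1 - l) • f k = v ^ (-twoRho n l) • f l := by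
  have entry : Jc n v l (n + 1 - l) = v ^ (-twoRho n l) := if_pos rfl
  rw [Finset.sum_eq_single_of_mem l hl, entry]
  intro k hk hkl
  rw [Finset.mem_Icc] at hk hl
  rw [Jc, if_neg (by rw [pr]; omega), zero_smul]

theorem Rc_comm {i j k l : ℕ} (hi : i ∈ Finset.Icc 1 n) (hj : j ∈ Finset.Icc 1 n)
    (hk : k ∈ Finset.Icc 1 n) (hl : l ∈ Finset.Icc 1 n) :
    Rc n q v j i k l = Rc n q v l k i j := by
  rw [Finset.mem_Icc] at hi hj hk hl
  have exponent : ((if j = i then 1 else 0) - (if j = pr n i then 1 else 0) : ℤ) =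
      (if i = j then 1 else 0) - (if i = pr n j then 1 else 0) := by
    rw [if_congr (eq_comm (a := j)) rfl rfl,
      if_congr (show j = pr n i ↔ i = pr n j by rw [pr, pr]; omega) rfl rfl]
  have off : (if k < j then (1 : ℂ) else 0) *
      ((if i = k then 1 else 0) * (if j = l then 1 else 0) - Jc n v i j * Jc n v k l) =
      (if i < l then 1 else 0) *
        ((if k = i then 1 else 0) * (if l = j then 1 else 0) - Jc n v k l * Jc n v i j) := by
    rw [mul_comm (Jc n v k l), if_congr (eq_comm (a := k)) rfl rfl,
      if_congr (eq_comm (a := l)) rfl rfl]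
    by_cases swap : i = k ∧ j = l
    · rw [swap.1, swap.2]
    by_cases form : j = pr n i ∧ l = pr n k
    · rw [if_congr (show k < j ↔ i < l by rw [form.1, form.2, pr, pr]; omega) rfl rfl]
    · rw [ite_zero_mul_ite_zero, if_neg swap, Jc, Jc, ite_zero_mul_ite_zero, if_neg form, sub_zero,
        mul_zero, mul_zero]
  rw [Rc, Rc, mul_right_comm _ _ (_ - _), off, mul_right_comm _ _ (_ - _)]
  refine congrArg (· + _) ?_
  rw [mul_assoc, mul_assoc, ite_zero_mul_ite_zero, ite_zero_mul_ite_zero]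
  by_cases diag : j = k ∧ i = l
  · obtain ⟨rfl, rfl⟩ := diag
    simp only [exponent, and_self, if_true]
  · rw [if_neg diag, if_neg (fun h : l = i ∧ k = j ↦ diag ⟨h.2.symm, h.1.symm⟩), mul_zero, mul_zero]

theorem sum_sum_Jc_smul_of_lt {M : Type*} [AddCommGroup M] [Module ℂ M] {a : ℕ}
    (ha : a ∈ Finset.Icc 1 n) (f : ℕ → ℕ → M) :
    ∑ k ∈ Finset.Icc 1 n, ∑ l ∈ Finset.Icc 1 n, Jc n v k l • (if a < l then f k l else 0) =
      ∑ k ∈ Finset.Ico 1 (n + 1 - a), v ^ (-twoRho n k) • f k (n + 1 - k) := by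
  have range : {k ∈ Finset.Icc 1 n | a < n + 1 - k} = Finset.Ico 1 (n + 1 - a) := by
    ext k
    rw [Finset.mem_Icc] at ha
    rw [Finset.mem_filter, Finset.mem_Icc, Finset.mem_Ico]
    omega
  rw [← range, Finset.sum_filter]
  refine Finset.sum_congr rfl fun k hk ↦ ?_
  rw [sum_Jc_smul hk fun l ↦ if a < l then f k l else 0, smul_ite, smul_zero]

theorem sum_Rc_smul {M : Type*} [AddCommGroup M] [Module ℂ M] {a b : ℕ}
    (ha : a ∈ Finset.Icc 1 n) (hb : b ∈ Finset.Icc 1 n) (f : ℕ → ℕ → M) :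
    ∑ k ∈ Finset.Icc 1 n, ∑ l ∈ Finset.Icc 1 n, Rc n q v l k a b • f k l =
      frtSide n q v a b (f b a) (f a b)
        (∑ k ∈ Finset.Ico 1 b, v ^ (-twoRho n k) • f k (n + 1 - k)) := by
  have mirror : a = pr n b ↔ b = n + 1 - a := by
    rw [Finset.mem_Icc] at ha hb
    rw [pr]
    omega
  have diagonal : ∑ k ∈ Finset.Icc 1 n, ∑ l ∈ Finset.Icc 1 n,
      (q ^ ((if l = k then 1 else 0) - (if l = pr n k then 1 else 0) : ℤ) *
        (if l = a then 1 else 0) * (if k = b then 1 else 0)) • f k l =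
      q ^ ((if a = b then 1 else 0) - (if b = n + 1 - a then 1 else 0) : ℤ) • f b a := by
    simp only [mul_ite, mul_one, mul_zero, ite_smul, zero_smul, Finset.sum_ite_eq', ha, hb, if_true,
      Finset.sum_ite_irrel, Finset.sum_const_zero, if_congr mirror]
  have swap : ∑ k ∈ Finset.Icc 1 n, ∑ l ∈ Finset.Icc 1 n,
      ((if a < l then 1 else 0) * (q - q⁻¹) *
        ((if k = a then 1 else 0) * (if l = b then 1 else 0))) • f k l =
      if a < b then (q - q⁻¹) • f a b else 0 := by
    simp only [mul_ite, ite_mul, mul_one, mul_zero, one_mul, zero_mul, ite_smul, zero_smul,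
      Finset.sum_ite_eq', ha, hb, if_true]
  have form : ∑ k ∈ Finset.Icc 1 n, ∑ l ∈ Finset.Icc 1 n,
      ((if a < l then 1 else 0) * (q - q⁻¹) * (Jc n v k l * Jc n v a b)) • f k l =
      if b = n + 1 - a then ((q - q⁻¹) * v ^ (-twoRho n a)) •
        ∑ k ∈ Finset.Ico 1 b, v ^ (-twoRho n k) • f k (n + 1 - k) else 0 := by
    have scalar (k l : ℕ) :
        ((if a < l then 1 else 0) * (q - q⁻¹) * (Jc n v k l * Jc n v a b)) • f k l =
          ((q - q⁻¹) * Jc n v a b) • Jc n v k l • if a < l then f k l else 0 := by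
      split_ifs
      · rw [smul_smul]
        congr 1
        ring
      · simp only [zero_mul, zero_smul, smul_zero]
    simp only [scalar, ← Finset.smul_sum, sum_sum_Jc_smul_of_lt ha]
    by_cases hab : b = n + 1 - a
    · rw [if_pos hab, ← hab, Jc, if_pos (show b = pr n a from hab)]
    · rw [if_neg hab, Jc, if_neg (show b ≠ pr n a from hab), mul_zero, zero_smul]
  simp only [Rc, add_smul, mul_sub (_ * (q - q⁻¹)), sub_smul, Finset.sum_add_distrib,
    Finset.sum_sub_distrib]
  rw [diagonal, swap, form, frtSide, add_sub_assoc]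

theorem isQuantumOrthogonal_z (hv : v ≠ 0) : IsQuantumOrthogonal n q v (z n q v) where
  frt {i b j a} hi hb hj ha := by
    have rel := RingQuot.mkAlgHom_rel ℂ (Rel.frt (q := q) (v := v) i b j a hi hb hj ha)
    simp only [frtRel, Finset.sum_sub_distrib, map_sub, map_sum, map_smul, map_mul, map_zero]
      at rel
    have left := sum_Rc_smul (q := q) (v := v) ha hb fun k l ↦ z n q v i k * z n q v j l
    have right := sum_Rc_smul (q := q) (v := v) hi hj fun k l ↦ z n q v k a * z n q v l b
    refine left.symm.trans ((sub_eq_zero.1 rel).trans (Eq.trans ?_ right))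
    exact Finset.sum_congr rfl fun k hk ↦ Finset.sum_congr rfl fun l hl ↦ by
      rw [Rc_comm hi hj hk hl]; rfl
  isotropic_row {i} hi hii := by
    have mem : n + 1 - i ∈ Finset.Icc 1 n := by rw [Finset.mem_Icc] at *; omega
    have rel := RingQuot.mkAlgHom_rel ℂ (Rel.orth₁ (q := q) (v := v) i (n + 1 - i) hi mem)
    rw [orthRel₁, if_neg (by omega), sub_zero, map_zero] at rel
    simp only [map_sum, map_smul, map_mul, mul_smul, ← Finset.smul_sum, sum_Jc_smul' hi,
      smul_comm _ (v ^ (-twoRho n i))] at rel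
    refine Eq.trans ?_ ((smul_eq_zero_iff_right (zpow_ne_zero _ hv)).1 rel)
    exact Finset.sum_congr rfl fun k hk ↦ (sum_Jc_smul hk fun l ↦ z n q v i k * z n q v i l).symm
  isotropic_col {j} hj hjj := by
    have mem : n + 1 - j ∈ Finset.Icc 1 n := by rw [Finset.mem_Icc] at *; omega
    have rel := RingQuot.mkAlgHom_rel ℂ (Rel.orth₂ (q := q) (v := v) (n + 1 - j) j mem hj)
    rw [orthRel₂, if_neg (by omega), sub_zero, map_zero] at rel
    simp only [map_sum, map_smul, map_mul, mul_smul, ← Finset.smul_sum, sum_Jc_smul mem] at rel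
    rw [show n + 1 - (n + 1 - j) = j by rw [Finset.mem_Icc] at hj; omega] at rel
    refine Eq.trans ?_ ((smul_eq_zero_iff_right (zpow_ne_zero _ hv)).1 rel)
    exact Finset.sum_congr rfl fun l hl ↦ (sum_Jc_smul hl fun m ↦ z n q v l j * z n q v m j).symm

variable {A : Type*} [Ring A] [Algebra ℂ A] {x y : ℕ → ℕ → A} {N : ℕ} {i j : ℕ}

theorem IsQuantumOrthogonal.sum_middle_row_mul_pow_of_upper (hx : IsQuantumOrthogonal n q v x)
    (hx0 : ∀ i j, j < i → x i j = 0) {r : ℕ → A} (hr : IsQuantumVector n q v r)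
    (hxr : ∀ i j k, Commute (x i j) (r k)) (hN : Odd N) (hN1 : 1 < N) (hq : IsPrimitiveRoot q N)
    (hv : v ≠ 0) (hi : 2 * i = n + 1) (hj : j ≤ n) :
    (∑ k ∈ Finset.Icc i j, x i k * r k) ^ N = ∑ k ∈ Finset.Icc i j, (x i k * r k) ^ N := by
  refine hx.sum_middle_row_mul_pow hN hN1 hq hv hi (Finset.Icc_subset_Icc (by omega) hj) ?_ ?_ hr
    hxr
  · intro b hb a ha hba
    rw [Finset.mem_Icc] at hb
    omega
  · intro b hb a ha hba hmid k hk
    rw [Finset.mem_Icc] at hb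
    rw [Finset.mem_Ico] at hk
    rw [hx0 (n + 1 - k) b (by omega), mul_zero]

theorem IsQuantumOrthogonal.sum_mul_middle_col_pow_of_upper (hy : IsQuantumOrthogonal n q v y)
    (hy0 : ∀ i j, j < i → y i j = 0) {r : ℕ → A} (hr : IsQuantumVector n q v r)
    (hyr : ∀ i j k, Commute (y i j) (r k)) (hN : Odd N) (hN1 : 1 < N) (hq : IsPrimitiveRoot q N)
    (hv : v ≠ 0) (hi : 1 ≤ i) (hj : 2 * j = n + 1) :
    (∑ k ∈ Finset.Icc i j, r k * y k j) ^ N = ∑ k ∈ Finset.Icc i j, (r k * y k j) ^ N := by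
  simp only [← (hyr _ j _).eq]
  refine hy.transpose.sum_middle_row_mul_pow hN hN1 hq hv hj
    (Finset.Icc_subset_Icc hi (by omega)) ?_ ?_ hr fun k l ↦ hyr l k
  · intro b _ a ha hba
    rw [Finset.mem_Icc] at ha
    omega
  · intro b _ a ha hba hmid k hk
    rw [Finset.mem_Icc] at ha
    rw [Finset.mem_Ico] at hk
    rw [hy0 a k (by omega), zero_mul]

theorem cCoef_of_two_mul_eq (h : 2 * i = n + 1 ∨ 2 * j = n + 1) (k : ℕ) :
    cCoef n N q i j k = 1 := by
  rw [cCoef, if_neg (by omega)]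

theorem cCoef_of_two_mul_ne {k : ℕ} (hi : 2 * i ≠ n + 1) (hj : 2 * j ≠ n + 1)
    (hk : k ∈ Finset.Icc i j) :
    cCoef n N q i j k = if 2 * k = n + 1 then 2 / (1 + q) ^ N else 1 := by
  rw [Finset.mem_Icc] at hk
  refine if_congr ⟨fun h ↦ h.2.1, fun h ↦ ⟨?_, h, ?_⟩⟩ rfl rfl
  · exact ⟨k - 1, by omega⟩
  · omega

theorem IsQuantumOrthogonal.sum_Icc_mul_pow (hx : IsQuantumOrthogonal n q v x)
    (hy : IsQuantumOrthogonal n q v y) (hx0 : ∀ i j, j < i → x i j = 0)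
    (hy0 : ∀ i j, j < i → y i j = 0) (hxy : ∀ i k l j, Commute (x i k) (y l j)) (hN : Odd N)
    (hN1 : 1 < N) (hq : IsPrimitiveRoot q N) (hvq : v ^ 2 = q) (hi : 1 ≤ i) (hij : i ≤ j)
    (hj : j ≤ n) :
    (∑ k ∈ Finset.Icc i j, x i k * y k j) ^ N =
      ∑ k ∈ Finset.Icc i j, cCoef n N q i j k • (x i k * y k j) ^ N := by
  have hq0 : q ≠ 0 := hq.ne_zero hN.pos.ne'
  have hv : v ≠ 0 := pow_ne_zero_iff two_ne_zero |>.1 (hvq ▸ hq0)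
  have row (h : 2 * i ≠ n + 1) : IsQuantumVector n q v (x i) :=
    hx.isQuantumVector_row hq0 hv (Finset.mem_Icc.2 (by omega)) h
  have col (h : 2 * j ≠ n + 1) : IsQuantumVector n q v (y · j) :=
    hy.transpose.isQuantumVector_row hq0 hv (Finset.mem_Icc.2 (by omega)) h
  obtain rfl | hlt := hij.eq_or_lt
  · rw [Finset.Icc_self, Finset.sum_singleton, Finset.sum_singleton, cCoef, if_neg (by omega),
      one_smul]
  by_cases hmid : 2 * i = n + 1 ∨ 2 * j = n + 1
  · simp only [cCoef_of_two_mul_eq hmid, one_smul]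
    obtain hic | hjc := hmid
    · exact hx.sum_middle_row_mul_pow_of_upper hx0 (col (by omega)) (fun a b k ↦ hxy a b k j) hN
        hN1 hq hv hic hj
    · exact hy.sum_mul_middle_col_pow_of_upper hy0 (row (by omega))
        (fun a b k ↦ (hxy i k a b).symm) hN hN1 hq hv hi hjc
  · rw [not_or] at hmid
    have outside (k : ℕ) (hk : k ∉ Finset.Icc i j) : x i k * y k j = 0 := by
      rw [Finset.mem_Icc, not_and_or, not_le, not_le] at hk
      obtain hki | hjk := hk
      · rw [hx0 i k hki, zero_mul]
      · rw [hy0 k j hjk, mul_zero]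
    rw [Finset.sum_congr rfl fun k hk ↦ congrArg (· • _) (cCoef_of_two_mul_ne hmid.1 hmid.2 hk),
      Finset.sum_subset (Finset.Icc_subset_Icc hi hj) fun k _ hk ↦ outside k hk,
      Finset.sum_subset (Finset.Icc_subset_Icc hi hj) fun k _ hk ↦ by
        rw [outside k hk, zero_pow hN.pos.ne', smul_zero]]
    exact (row hmid.1).sum_mul_pow (col hmid.2) (fun k l ↦ hxy i k l j) hN hN1 hq hvq

end Borel

/-- If `Δ` is an algebra map on `𝒪_q(B⁺)` given on the generators by the
standard comultiplication, then `Δ(z_{ij}^N) = ∑_{k=i}^{j} c^k_{ij} z_{ik}^N ⊗ z_{kj}^N`. -/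
theorem delta_pow_N (n : ℕ) (hn : 3 ≤ n) (N : ℕ) (hN1 : 1 < N) (hNodd : Odd N)
    (q v : ℂ) (hv : v ^ 2 = q) (hq : IsPrimitiveRoot q N)
    (Δ : OB n q v →ₐ[ℂ] (OB n q v ⊗[ℂ] OB n q v))
    (hΔ : ∀ i j : ℕ, 1 ≤ i → i ≤ j → j ≤ n →
      Δ (z n q v i j) = ∑ k ∈ Finset.Icc i j, z n q v i k ⊗ₜ[ℂ] z n q v k j) :
    ∀ i j : ℕ, 1 ≤ i → i ≤ j → j ≤ n →
      Δ (z n q v i j ^ N) =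
        ∑ k ∈ Finset.Icc i j,
          cCoef n N q i j k • ((z n q v i k ^ N) ⊗ₜ[ℂ] (z n q v k j ^ N)) := by
  intro i j hi hij hj
  have hv0 : v ≠ 0 := pow_ne_zero_iff two_ne_zero |>.1 (hv ▸ hq.ne_zero hNodd.pos.ne')
  have orthogonal : IsQuantumOrthogonal n q v (z n q v) := isQuantumOrthogonal_z hv0
  have left := orthogonal.map (B := OB n q v ⊗[ℂ] OB n q v) Algebra.TensorProduct.includeLeft
  have right := orthogonal.map (B := OB n q v ⊗[ℂ] OB n q v) Algebra.TensorProduct.includeRight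
  have key := left.sum_Icc_mul_pow right
    (fun a b h ↦ by rw [z_of_lt h, map_zero]) (fun a b h ↦ by rw [z_of_lt h, map_zero])
    (fun _ _ _ _ ↦ (Commute.one_right _).tmul (Commute.one_left _)) hNodd hN1 hq hv hi hij hj
  simpa only [map_pow, hΔ i j hi hij hj, Algebra.TensorProduct.includeLeft_apply,
    Algebra.TensorProduct.includeRight_apply, Algebra.TensorProduct.tmul_mul_tmul, mul_one, one_mul,
    Algebra.TensorProduct.tmul_pow] using key

end SOq
end
end

section
/- Let θ ≥ 1, let N ≥ 1 be an integer, and let q ∈ ℂ with q ≠ 0 and q² ≠ 1. Fix complex parameters μ_{ij} ∈ ℂ for 1 ≤ i < j ≤ θ+1. Let Q be the (θ+1)×(θ+1) complex matrix with Q_{ii} = 1, Q_{ij} = (−1)^{i−j−1}(1 − q^{−2})^N μ_{ij} for i < j, and Q_{ij} = 0 for i > j. For any t₁, …, t_{θ+1} ∈ ℂˣ set P := diag(t₁, …, t_{θ+1}), M := Q^{−1} P Q, and F_{ij} := (−1)^{j−i}(1 − q^{−2})^{−N} M_{ij} t_j^{−1} for i < j. Then for all 1 ≤ i < j ≤ θ+1: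 F_{ij} = μ_{ij}(1 − t_i t_j^{−1}) + (1 − q^{−2})^N Σ_{k=i+1}^{j−1} μ_{ik} F_{kj}. (This is the evaluated form of the type-A_θ lifting theorem: F_{ij} is the evaluation of the root-vector power x_{(ij)}^N, and t_i t_j^{−1} the evaluation of the group-like g_{(ij)}^N, so the identity expresses x_{(ij)}^N = μ_{ij}(1 − g_{(ij)}^N) + (1 − q^{−2})^N Σ_{k=i+1}^{j−1} μ_{ik} x_{(kj)}^N.) -/
noncomputable section

/-!
Put `M = Q⁻¹ * diagonal t * Q`. It is upper triangular with diagonal `t`, and comparing the entries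
`(i, j)` of `Q * M = diagonal t * Q` gives
`M i j = t i * Q i j - Q i j * t j - ∑ k ∈ Ioo i j, Q i k * M k j`.
The signs in the definitions of `Q` and `F` come from conjugation by `diagonal g`, `g i = (-1) ^ i`,
which leaves `diagonal t` unchanged. Any other invertible `g` would do, and dividing the recursion
by `c * (g j / g i) * t j`, where `c = (1 - q⁻²) ^ N`, turns it into the recursion for `F`.
-/

section Scalars

variable {K : Type*} [DivisionRing K]

theorem one_sub_inv_pow_ne_zero {q : K} {n : ℕ} (hq : q ^ n ≠ 1) : 1 - q⁻¹ ^ n ≠ 0 := by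
  rwa [sub_ne_zero, ne_comm, inv_pow, Ne, inv_eq_one]

theorem neg_one_zpow_sub_sub_one {m n : ℕ} (hmn : m ≤ n) :
    (-1 : K) ^ ((m : ℤ) - n - 1) = -(-1) ^ (n - m) := by
  have hexp : (m : ℤ) - n - 1 = -((n - m : ℕ) + 1 : ℤ) := by omega
  rw [hexp, zpow_neg, ← inv_zpow, inv_neg_one, zpow_add_one₀ (by simp), zpow_natCast, mul_neg_one]

end Scalars

open Finset Matrix

theorem mul_apply_eq_sum_Icc_of_isUpperTriangular {ι R : Type*} [Fintype ι] [LinearOrder ι]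
    [LocallyFiniteOrder ι] [NonUnitalNonAssocSemiring R] {A B : Matrix ι ι R}
    (hA : A.IsUpperTriangular) (hB : B.IsUpperTriangular) (i j : ι) :
    (A * B) i j = ∑ k ∈ Icc i j, A i k * B k j := by
  rw [mul_apply]
  refine (sum_subset (subset_univ _) fun k _ hk => ?_).symm
  rw [mem_Icc, not_and_or, not_le, not_le] at hk
  rcases hk with hki | hjk
  · rw [hA hki, zero_mul]
  · rw [hB hjk, mul_zero]

/-- Upper unitriangular matrices, the elements of the unipotent radical of the Borel subgroup of
upper triangular matrices. -/
structure IsUpperUnitriangular {ι R : Type*} [LT ι] [Zero R] [One R] (Q : Matrix ι ι R) : Prop where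
  isUpperTriangular : Q.IsUpperTriangular
  diag_eq_one : ∀ i, Q i i = 1

namespace IsUpperUnitriangular

variable {ι R : Type*} [Fintype ι] [LinearOrder ι]

section Ring

variable [LocallyFiniteOrder ι] [Ring R] {Q M : Matrix ι ι R} {t : ι → R}

theorem apply_self_of_mul_eq_diagonal_mul (hQ : IsUpperUnitriangular Q) (hM : M.IsUpperTriangular)
    (hQM : Q * M = diagonal t * Q) (j : ι) : M j j = t j := by
  simpa [mul_apply_eq_sum_Icc_of_isUpperTriangular hQ.isUpperTriangular hM, hQ.diag_eq_one]
    using congr_fun₂ hQM j j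

theorem apply_of_mul_eq_diagonal_mul (hQ : IsUpperUnitriangular Q) (hM : M.IsUpperTriangular)
    (hQM : Q * M = diagonal t * Q) {i j : ι} (hij : i < j) :
    M i j = t i * Q i j - Q i j * t j - ∑ k ∈ Ioo i j, Q i k * M k j := by
  have hentry : M i j + (Q i j * t j + ∑ k ∈ Ioo i j, Q i k * M k j) = t i * Q i j := by
    rw [← diagonal_mul, ← hQM, mul_apply_eq_sum_Icc_of_isUpperTriangular hQ.isUpperTriangular hM,
      ← add_sum_Ioc_eq_sum_Icc hij.le, ← add_sum_Ioo_eq_sum_Ioc hij, hQ.diag_eq_one, one_mul,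
      hQ.apply_self_of_mul_eq_diagonal_mul hM hQM]
  rw [sub_sub, ← hentry, add_sub_cancel_right]

end Ring

section CommRing

variable [CommRing R] {Q : Matrix ι ι R}

theorem isUnit_det (hQ : IsUpperUnitriangular Q) : IsUnit Q.det := by
  simp [det_of_isUpperTriangular hQ.isUpperTriangular, hQ.diag_eq_one]

theorem isUpperTriangular_inv_mul_diagonal_mul (hQ : IsUpperUnitriangular Q) (t : ι → R) :
    (Q⁻¹ * diagonal t * Q).IsUpperTriangular :=
  have : Invertible Q := invertibleOfIsUnitDet Q hQ.isUnit_det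
  ((blockTriangular_inv_of_blockTriangular hQ.isUpperTriangular).mul
    (blockTriangular_diagonal t)).mul hQ.isUpperTriangular

theorem inv_mul_diagonal_mul_apply [LocallyFiniteOrder ι] (hQ : IsUpperUnitriangular Q) (t : ι → R)
    {i j : ι} (hij : i < j) :
    (Q⁻¹ * diagonal t * Q) i j =
      t i * Q i j - Q i j * t j - ∑ k ∈ Ioo i j, Q i k * (Q⁻¹ * diagonal t * Q) k j :=
  hQ.apply_of_mul_eq_diagonal_mul (hQ.isUpperTriangular_inv_mul_diagonal_mul t)
    (by rw [Matrix.mul_assoc, mul_nonsing_inv_cancel_left _ _ hQ.isUnit_det]) hij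

end CommRing

end IsUpperUnitriangular

theorem liftingA_evaluated_general {ι R : Type*} [Fintype ι] [LinearOrder ι] [LocallyFiniteOrder ι]
    [CommRing R] (c : Rˣ) (g t : ι → Rˣ) {μ : ι → ι → R} {Q : Matrix ι ι R}
    (hQ : IsUpperUnitriangular Q)
    (hQμ : ∀ i j, i < j → Q i j = -(↑(c * (g j / g i)) * μ i j))
    {M : Matrix ι ι R} (hM : M = Q⁻¹ * diagonal (fun i => (t i : R)) * Q) {F : ι → ι → R}
    (hF : ∀ i j, i < j → F i j = ↑(c * (g j / g i) * t j)⁻¹ * M i j) {i j : ι} (hij : i < j) :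
    F i j = μ i j * (1 - ↑(t i / t j)) + c * ∑ k ∈ Ioo i j, μ i k * F k j := by
  have hMF : ∀ k, k < j → M k j = ↑(c * (g j / g k) * t j) * F k j := fun k hkj => by
    rw [hF k j hkj, Units.mul_inv_cancel_left]
  have hterm : ∀ k ∈ Ioo i j,
      Q i k * M k j = -(↑(c * (g j / g i) * t j) * (c * (μ i k * F k j))) := fun k hk => by
    obtain ⟨hik, hkj⟩ := mem_Ioo.mp hk
    have hg : (↑(g k / g i) * ↑(g j / g k) : R) = ↑(g j / g i) := by
      rw [← Units.val_mul, mul_comm, div_mul_div_cancel]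
    rw [hQμ i k hik, hMF k hkj]
    push_cast
    linear_combination (-(c * c * t j * μ i k * F k j) : R) * hg
  have ht : (↑(t i / t j) * t j : R) = t i := by rw [← Units.val_mul, div_mul_cancel]
  rw [← Units.mul_right_inj (c * (g j / g i) * t j), ← hMF i hij, hM,
    hQ.inv_mul_diagonal_mul_apply _ hij, ← hM, sum_congr rfl hterm, sum_neg_distrib, ← mul_sum,
    ← mul_sum, hQμ i j hij]
  push_cast
  linear_combination (c * ↑(g j / g i) * μ i j : R) * ht

/-- Evaluated form of the type `A_θ` lifting theorem: for
`M = Q⁻¹ diag(t) Q` with `Q` the unipotent upper triangular matrix built from the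
root-vector parameters `μ`, the quantities
`F_{ij} = (-1)^{j-i} (1-q⁻²)^{-N} M_{ij} t_j⁻¹` satisfy
`F_{ij} = μ_{ij}(1 - t_i t_j⁻¹) + (1-q⁻²)^N ∑_{k=i+1}^{j-1} μ_{ik} F_{kj}`. -/
theorem liftingA_evaluated (θ N : ℕ) (hθ : 1 ≤ θ) (hN : 1 ≤ N)
    (q : ℂ) (hq0 : q ≠ 0) (hq1 : q ^ 2 ≠ 1)
    (μ : Fin (θ + 1) → Fin (θ + 1) → ℂ)
    (Q : Matrix (Fin (θ + 1)) (Fin (θ + 1)) ℂ)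
    (hQdiag : ∀ i, Q i i = 1)
    (hQupper : ∀ i j : Fin (θ + 1), i < j →
      Q i j = (-1 : ℂ) ^ (((i : ℕ) : ℤ) - ((j : ℕ) : ℤ) - 1) * (1 - q⁻¹ ^ 2) ^ N * μ i j)
    (hQlower : ∀ i j : Fin (θ + 1), j < i → Q i j = 0)
    (t : Fin (θ + 1) → ℂ) (ht : ∀ i, t i ≠ 0)
    (M : Matrix (Fin (θ + 1)) (Fin (θ + 1)) ℂ)
    (hM : M = Q⁻¹ * Matrix.diagonal t * Q)
    (F : Fin (θ + 1) → Fin (θ + 1) → ℂ)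
    (hF : ∀ i j : Fin (θ + 1), i < j →
      F i j = (-1 : ℂ) ^ ((j : ℕ) - (i : ℕ)) * ((1 - q⁻¹ ^ 2) ^ N)⁻¹ * M i j * (t j)⁻¹) :
    ∀ i j : Fin (θ + 1), i < j →
      F i j = μ i j * (1 - t i * (t j)⁻¹) +
        (1 - q⁻¹ ^ 2) ^ N * ∑ k ∈ Finset.Ioo i j, μ i k * F k j := by
  let c : ℂˣ := Units.mk0 _ (pow_ne_zero N (one_sub_inv_pow_ne_zero hq1))
  let g (i : Fin (θ + 1)) : ℂˣ := (-1) ^ (i : ℕ)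
  let u (i : Fin (θ + 1)) : ℂˣ := Units.mk0 (t i) (ht i)
  have hg {i j : Fin (θ + 1)} (hij : i < j) : g j / g i = (-1) ^ (j - i : ℕ) := by
    rw [pow_sub _ hij.le, div_eq_mul_inv]
  have hQ : IsUpperUnitriangular Q := ⟨fun i j => hQlower i j, hQdiag⟩
  have hQμ (i j) (hij : i < j) : Q i j = -(↑(c * (g j / g i)) * μ i j) := by
    rw [hQupper i j hij, neg_one_zpow_sub_sub_one hij.le, hg hij]
    simp [c, mul_comm]
  have hFM (i j) (hij : i < j) : F i j = ↑(c * (g j / g i) * u j)⁻¹ * M i j := by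
    rw [hF i j hij, hg hij, mul_inv, mul_inv, ← inv_pow (-1 : ℂˣ), inv_neg_one]
    simp only [c, u, Units.val_mul, Units.val_pow_eq_pow_val, Units.val_neg, Units.val_one,
      Units.val_inv_eq_inv_val, Units.val_mk0]
    ring
  intro i j hij
  simpa [c, u, div_eq_mul_inv] using liftingA_evaluated_general c g u hQ hQμ hM hFM hij
end
end
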